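/- arXiv:1701.08949 — 2 statements merged into one kernel-verified Lean document; each statement's English description precedes it below -/
import Mathlib

section
/- Let V be a variety whose 2-generated free algebra F_V(2) is finite. The following are equivalent: (1) V has a single term c(x,y,z) which is a weak n-difference term for V for every n ≥ 2; (2) V has an idempotent ternary term which restricts to a Mal'cev operation on every block of every supernilpotent congruence of every member of V; (3) V has a weak difference term. -/
set_option autoImplicit false

namespace UA

/-- A signature: a type of operation symbols, each with a finite arity. -/
structure Signature : Type 1 where
  ops : Type
  arity : ops → ℕ

/-- An algebra for a signature: a carrier set together with an interpretation
of every operation symbol. -/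
structure Algebra (σ : Signature) : Type 1 where
  carrier : Type
  interp : (o : σ.ops) → (Fin (σ.arity o) → carrier) → carrier

variable {σ : Signature}

/-- A congruence of an algebra: an equivalence relation compatible with all
basic operations. -/
structure Con (A : Algebra σ) : Type where
  r : A.carrier → A.carrier → Prop
  refl : ∀ a, r a a
  symm : ∀ {a b}, r a b → r b a
  trans : ∀ {a b c}, r a b → r b c → r a c
  compat : ∀ (o : σ.ops) (x y : Fin (σ.arity o) → A.carrier),
      (∀ i, r (x i) (y i)) → r (A.interp o x) (A.interp o y)

namespace Con

variable {A : Algebra σ}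

instance : LE (Con A) := ⟨fun c d => ∀ a b : A.carrier, c.r a b → d.r a b⟩
instance : LT (Con A) := ⟨fun c d => c ≤ d ∧ ¬ d ≤ c⟩

/-- The total congruence `1_A`. -/
def top : Con A where
  r := fun _ _ => True
  refl := fun _ => trivial
  symm := fun _ => trivial
  trans := fun _ _ => trivial
  compat := fun _ _ _ _ => trivial

/-- The identity congruence `0_A`. -/
def bot : Con A where
  r := fun a b => a = b
  refl := fun _ => rfl
  symm := fun h => h.symm
  trans := fun h h' => h.trans h'
  compat := fun o _ _ h => congrArg (A.interp o) (funext h)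

/-- Meet of an arbitrary family of congruences (intersection). -/
def sInf (S : Set (Con A)) : Con A where
  r a b := ∀ c ∈ S, c.r a b
  refl a c _ := c.refl a
  symm h c hc := c.symm (h c hc)
  trans h h' c hc := c.trans (h c hc) (h' c hc)
  compat o x y h c hc := c.compat o x y (fun i => h i c hc)

/-- Binary meet of congruences. -/
def inf (c d : Con A) : Con A where
  r a b := c.r a b ∧ d.r a b
  refl a := ⟨c.refl a, d.refl a⟩
  symm h := ⟨c.symm h.1, d.symm h.2⟩
  trans h h' := ⟨c.trans h.1 h'.1, d.trans h.2 h'.2⟩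
  compat o x y h := ⟨c.compat o x y fun i => (h i).1, d.compat o x y fun i => (h i).2⟩

/-- The congruence generated by a set of pairs. -/
def conGen (S : Set (A.carrier × A.carrier)) : Con A :=
  sInf {c : Con A | ∀ p ∈ S, c.r p.1 p.2}

/-- Binary join of congruences. -/
def sup (c d : Con A) : Con A := conGen {p | c.r p.1 p.2 ∨ d.r p.1 p.2}

/-- Join of a family of congruences. -/
def iSup {I : Type} (f : I → Con A) : Con A := conGen {p | ∃ i, (f i).r p.1 p.2}

/-- Composition of congruences as binary relations. -/
def comp (c d : Con A) (a b : A.carrier) : Prop := ∃ x, c.r a x ∧ d.r x b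

/-- `d` covers `c` in the congruence lattice. -/
def Covers (c d : Con A) : Prop := c < d ∧ ∀ e : Con A, c < e → e ≤ d → e = d

theorem le_sup_right {c d : Con A} : d ≤ sup c d :=
  fun a b h e he => he (a, b) (Or.inr h)

def toSetoid (c : Con A) : Setoid A.carrier := ⟨c.r, ⟨c.refl, c.symm, c.trans⟩⟩

end Con

/-- The quotient algebra `A/γ`. -/
noncomputable def quotAlg (A : Algebra σ) (γ : Con A) : Algebra σ where
  carrier := Quotient γ.toSetoid
  interp o x := Quotient.mk γ.toSetoid (A.interp o (fun i => (x i).out))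

/-- The quotient congruence `α/γ` for `γ ≤ α`. -/
noncomputable def Con.quot {A : Algebra σ} (α γ : Con A) (h : γ ≤ α) : Con (quotAlg A γ) where
  r x y := Quotient.liftOn₂ x y (fun a b => α.r a b)
    (fun a b a' b' ha hb => propext
      ⟨fun hr => α.trans (α.symm (h _ _ ha)) (α.trans hr (h _ _ hb)),
       fun hr => α.trans (h _ _ ha) (α.trans hr (α.symm (h _ _ hb)))⟩)
  refl x := Quotient.inductionOn x fun a => α.refl a
  symm {x y} h' := Quotient.inductionOn₂ x y (fun _ _ hab => α.symm hab) h'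
  trans {x y z} h1 h2 :=
    Quotient.inductionOn₃ x y z (fun _ _ _ hab hbc => α.trans hab hbc) h1 h2
  compat o x y hxy := by
    show α.r (A.interp o fun i => (x i).out) (A.interp o fun i => (y i).out)
    refine α.compat o _ _ fun i => ?_
    have h1 := hxy i
    rw [← Quotient.out_eq (x i), ← Quotient.out_eq (y i)] at h1
    exact h1

/-- The polynomial operations of an algebra: the clone generated by the basic
operations, the projections and the constants. -/
inductive IsPolynomial (A : Algebra σ) : {n : ℕ} → ((Fin n → A.carrier) → A.carrier) → Prop
  | proj {n : ℕ} (i : Fin n) : IsPolynomial A (fun x => x i)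
  | const {n : ℕ} (a : A.carrier) : IsPolynomial A (fun _ : Fin n → A.carrier => a)
  | app {n : ℕ} (o : σ.ops) (g : Fin (σ.arity o) → (Fin n → A.carrier) → A.carrier) :
      (∀ j, IsPolynomial A (g j)) → IsPolynomial A (fun x => A.interp o (fun j => g j x))

/-- Substituting, coordinatewise according to the grouping `g` and the choice
vector `ε`, the entries of `b` (where `ε` is `true`) or of `a` (where `ε` is `false`). -/
def chooseVec {β : Type} {N n : ℕ} (g : Fin N → Fin n) (a b : Fin N → β)
    (ε : Fin n → Bool) : Fin N → β :=
  fun i => if ε (g i) then b i else a i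

/-- The higher centralizer relation `C(α₁,…,αₙ,β;δ)` of Bulatov.  Polynomials with
grouped variables are modelled by a polynomial `p` of arity `N` together with a
grouping map `g : Fin N → Fin (n+1)`; the group `Fin.last n` is the `β`-group. -/
def Centralizes {A : Algebra σ} {n : ℕ} (α : Fin n → Con A) (β δ : Con A) : Prop :=
  ∀ (N : ℕ) (p : (Fin N → A.carrier) → A.carrier), IsPolynomial A p →
    ∀ (g : Fin N → Fin (n + 1)) (a b : Fin N → A.carrier),
      (∀ i, (Fin.lastCases (motive := fun _ => Con A) β α (g i)).r (a i) (b i)) →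
      (∀ ε : Fin n → Bool, ε ≠ (fun _ => true) →
        δ.r (p (chooseVec g a b (Fin.lastCases (motive := fun _ => Bool) false ε)))
            (p (chooseVec g a b (Fin.lastCases (motive := fun _ => Bool) true ε)))) →
      δ.r (p (chooseVec g a b (Fin.lastCases (motive := fun _ => Bool) false fun _ => true)))
          (p (chooseVec g a b (Fin.lastCases (motive := fun _ => Bool) true fun _ => true)))

/-- The higher commutator `[α₁,…,αₙ,β]`: the smallest congruence `δ` such that
`C(α₁,…,αₙ,β;δ)` holds. -/
def commutator {A : Algebra σ} {n : ℕ} (α : Fin n → Con A) (β : Con A) : Con A :=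
  Con.sInf {δ : Con A | Centralizes α β δ}

/-- The higher commutator of a nonempty list of congruences, with the convention
`[α] = α` for a single congruence. -/
def commList {A : Algebra σ} : {n : ℕ} → (Fin (n + 1) → Con A) → Con A
  | 0, γ => γ 0
  | (n+1), γ => commutator (fun j : Fin (n+1) => γ j.castSucc) (γ (Fin.last (n+1)))

/-- The `m`-fold commutator `[θ,…,θ]_m` (for `m ≥ 1`). -/
def nfold {A : Algebra σ} (θ : Con A) (m : ℕ) : Con A :=
  commList (fun _ : Fin (m - 1 + 1) => θ)

/-- The binary commutator `[c,d]`. -/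
def binComm {A : Algebra σ} (c d : Con A) : Con A := commutator (fun _ : Fin 1 => c) d

/-- The lower central series `(θ]ⁿ`. -/
def lcs {A : Algebra σ} (θ : Con A) : ℕ → Con A
  | 0 => θ
  | (k+1) => binComm θ (lcs θ k)

/-- The derived series `[θ]ⁿ`. -/
def derived {A : Algebra σ} (θ : Con A) : ℕ → Con A
  | 0 => θ
  | (k+1) => binComm (derived θ k) (derived θ k)

/-- An algebra is nilpotent if some term of the lower central series of `1_A` is `0_A`. -/
def Nilpotent (A : Algebra σ) : Prop := ∃ m, lcs (Con.top : Con A) m = Con.bot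

/-- An algebra is nilpotent of class `n` if `(1_A]ⁿ = 0_A`. -/
def NilpotentOfClass (A : Algebra σ) (n : ℕ) : Prop := lcs (Con.top : Con A) n = Con.bot

/-- A congruence is solvable if some term of its derived series is `0_A`. -/
def SolvableCon {A : Algebra σ} (θ : Con A) : Prop := ∃ m, derived θ m = Con.bot

/-- `A` is `n`-supernilpotent if `[1_A,…,1_A]_n = 0_A`. -/
def Supernilpotent (A : Algebra σ) (n : ℕ) : Prop := nfold (Con.top : Con A) n = Con.bot

/-- A polynomial `f` absorbs the tuple `a` to the element `c`. -/
def Absorbs (A : Algebra σ) {k : ℕ} (f : (Fin k → A.carrier) → A.carrier)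
    (a : Fin k → A.carrier) (c : A.carrier) : Prop :=
  ∀ b : Fin k → A.carrier, (∃ i, b i = a i) → f b = c

/-- Terms over a signature with variables in `X`. -/
inductive Term (σ : Signature) (X : Type) : Type
  | var : X → Term σ X
  | app : (o : σ.ops) → (Fin (σ.arity o) → Term σ X) → Term σ X

/-- Evaluation of a term in an algebra under an assignment of the variables. -/
def Term.eval {X : Type} (A : Algebra σ) (v : X → A.carrier) : Term σ X → A.carrier
  | Term.var x => v x
  | Term.app o t => A.interp o fun i => Term.eval A v (t i)

/-- Substitution of terms into a term. -/
def Term.subst {X Y : Type} : Term σ X → (X → Term σ Y) → Term σ Y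
  | Term.var x, s => s x
  | Term.app o t, s => Term.app o fun i => Term.subst (t i) s

/-- `A` possesses a Mal'cev term. -/
def HasMalcevTerm (A : Algebra σ) : Prop :=
  ∃ t : Term σ (Fin 3), ∀ a b : A.carrier,
    t.eval A ![a, b, b] = a ∧ t.eval A ![b, b, a] = a

/-- A class of algebras is a variety when it is the class of all models of a set
of identities. -/
def IsVariety (V : Algebra σ → Prop) : Prop :=
  ∃ E : Set (Term σ ℕ × Term σ ℕ),
    ∀ A : Algebra σ, V A ↔ ∀ e ∈ E, ∀ v : ℕ → A.carrier, e.1.eval A v = e.2.eval A v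

/-- Two terms are `V`-equivalent when they evaluate equally in every member of `V`. -/
def vSetoid (V : Algebra σ → Prop) (X : Type) : Setoid (Term σ X) where
  r t s := ∀ A : Algebra σ, V A → ∀ v : X → A.carrier, t.eval A v = s.eval A v
  iseqv := ⟨fun _ _ _ _ => rfl, fun h A hA v => (h A hA v).symm,
    fun h h' A hA v => (h A hA v).trans (h' A hA v)⟩

/-- The `V`-free algebra on the set `X` of generators. -/
noncomputable def freeAlg (V : Algebra σ → Prop) (X : Type) : Algebra σ where
  carrier := Quotient (vSetoid V X)
  interp o x := Quotient.mk (vSetoid V X) (Term.app o fun i => (x i).out)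

/-- The principal congruence `θ(a,b)` generated by the pair `(a,b)`. -/
def conPair (A : Algebra σ) (a b : A.carrier) : Con A := Con.conGen {(a, b)}

/-- A weak difference term for the class `V`. -/
def IsWeakDiffTerm (V : Algebra σ → Prop) (c : Term σ (Fin 3)) : Prop :=
  ∀ A : Algebra σ, V A → ∀ a b : A.carrier,
    (binComm (conPair A a b) (conPair A a b)).r (c.eval A ![a, b, b]) a ∧
    (binComm (conPair A a b) (conPair A a b)).r a (c.eval A ![b, b, a])

/-- A weak `n`-difference term for the class `V`. -/
def IsWeakNDiffTerm (V : Algebra σ → Prop) (n : ℕ) (c : Term σ (Fin 3)) : Prop :=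
  ∀ A : Algebra σ, V A → ∀ a b : A.carrier,
    (nfold (conPair A a b) n).r (c.eval A ![a, b, b]) a ∧
    (nfold (conPair A a b) n).r a (c.eval A ![b, b, a])

/-- Order-preserving maps on the congruence lattice. -/
def MonotoneCon {A : Algebra σ} (F : Con A → Con A) : Prop :=
  ∀ c d : Con A, c ≤ d → F c ≤ F d

/-- `p` is a weak `f`-term of `A` with respect to the interpretation `F`. -/
def IsWeakFTerm (A : Algebra σ) (F : Con A → Con A) (p : Term σ (Fin 3)) : Prop :=
  ∀ (θ : Con A) (a b : A.carrier), θ.r a b →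
    (F θ).r (p.eval A ![a, b, b]) a ∧ (F θ).r a (p.eval A ![b, b, a])

/-- `p` is a weak `f`-term for the class `V`. -/
def HasWeakFTermVariety (V : Algebra σ → Prop) (p : Term σ (Fin 3)) : Prop :=
  ∀ A : Algebra σ, V A → ∃ F : Con A → Con A, MonotoneCon F ∧ IsWeakFTerm A F p

/-- The set `T^θ_{n,f}(θ₁,…,θₙ)` of pairs coming from polynomials which
`f(θ)`-absorb on the cube `{ā₁,b̄₁}×⋯×{āₙ,b̄ₙ}`. -/
def TSet (A : Algebra σ) (F : Con A → Con A) (θ : Con A) {n : ℕ} (θs : Fin n → Con A) :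
    Set (A.carrier × A.carrier) :=
  {pr | ∃ (N : ℕ) (g : (Fin N → A.carrier) → A.carrier), IsPolynomial A g ∧
    ∃ (gr : Fin N → Fin n) (a b : Fin N → A.carrier),
      (∀ i, (θs (gr i)).r (a i) (b i)) ∧
      (∀ ε : Fin n → Bool, (∃ j, ε j = false) →
        (F θ).r (g (fun i => if ε (gr i) then b i else a i)) (g a)) ∧
      pr = (g b, g a)}

/-- Homomorphisms of algebras. -/
def IsHom (A B : Algebra σ) (h : A.carrier → B.carrier) : Prop :=
  ∀ (o : σ.ops) (x : Fin (σ.arity o) → A.carrier),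
    h (A.interp o x) = B.interp o (fun i => h (x i))

/-- The product of a family of algebras. -/
def prodAlg {I : Type} (As : I → Algebra σ) : Algebra σ where
  carrier := ∀ i, (As i).carrier
  interp o x i := (As i).interp o (fun j => x j i)

/-- The subuniverse generated by a subset. -/
inductive Gen (A : Algebra σ) (S : Set A.carrier) : A.carrier → Prop
  | base {a : A.carrier} : a ∈ S → Gen A S a
  | app (o : σ.ops) (x : Fin (σ.arity o) → A.carrier) :
      (∀ i, Gen A S (x i)) → Gen A S (A.interp o x)

/-- `A` possesses a Taylor term. -/
def HasTaylorTerm (A : Algebra σ) : Prop :=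
  ∃ (n : ℕ) (t : Term σ (Fin n)), 1 ≤ n ∧
    (∀ a : A.carrier, t.eval A (fun _ => a) = a) ∧
    ∀ i : Fin n, ∃ u v : Fin n → Bool, u i = true ∧ v i = false ∧
      ∀ x y : A.carrier,
        t.eval A (fun j => if u j then x else y) = t.eval A (fun j => if v j then x else y)

/-- The variety `V` possesses a Taylor term. -/
def VarietyHasTaylorTerm (V : Algebra σ → Prop) : Prop :=
  ∃ (n : ℕ) (t : Term σ (Fin n)), 1 ≤ n ∧
    (∀ A : Algebra σ, V A → ∀ a : A.carrier, t.eval A (fun _ => a) = a) ∧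
    ∀ i : Fin n, ∃ u v : Fin n → Bool, u i = true ∧ v i = false ∧
      ∀ A : Algebra σ, V A → ∀ x y : A.carrier,
        t.eval A (fun j => if u j then x else y) = t.eval A (fun j => if v j then x else y)

/-- `Ξ(θ)`: the smallest set of congruences containing `θ` and closed under
higher commutators (of arity at least 2) of its members. -/
inductive Xi {A : Algebra σ} (θ : Con A) : Con A → Prop
  | base : Xi θ θ
  | comm {k : ℕ} (γ : Fin (k + 2) → Con A) : (∀ j, Xi θ (γ j)) → Xi θ (commList γ)

/-- An expanded loop on the carrier `α` with extra operations indexed by `ι`. -/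
structure ExpLoop (ι : Type) (ar : ι → ℕ) (α : Type) : Type where
  mul : α → α → α
  ldiv : α → α → α
  rdiv : α → α → α
  zero : α
  extra : (i : ι) → (Fin (ar i) → α) → α
  ldiv_mul : ∀ x y, ldiv x (mul x y) = y
  mul_rdiv : ∀ x y, rdiv (mul x y) y = x
  mul_ldiv : ∀ x y, mul x (ldiv x y) = y
  rdiv_mul : ∀ x y, mul (rdiv x y) y = x
  zero_mul : ∀ x, mul zero x = x
  mul_zero : ∀ x, mul x zero = x

/-- Operation symbols of an expanded loop. -/
inductive LoopOp (ι : Type) : Type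
  | mul | ldiv | rdiv | zero
  | extra : ι → LoopOp ι

/-- The signature of an expanded loop. -/
@[reducible] def loopSig (ι : Type) (ar : ι → ℕ) : Signature where
  ops := LoopOp ι
  arity o := match o with
    | .mul => 2
    | .ldiv => 2
    | .rdiv => 2
    | .zero => 0
    | .extra i => ar i

/-- The algebra underlying an expanded loop. -/
def ExpLoop.toAlgebra {ι : Type} {ar : ι → ℕ} {α : Type} (L : ExpLoop ι ar α) :
    Algebra (loopSig ι ar) where
  carrier := α
  interp o := match o with
    | .mul => fun x => L.mul (x 0) (x 1)
    | .ldiv => fun x => L.ldiv (x 0) (x 1)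
    | .rdiv => fun x => L.rdiv (x 0) (x 1)
    | .zero => fun _ => L.zero
    | .extra i => L.extra i

/-- An expanded loop is of `n`-type. -/
def ExpLoop.IsNType {ι : Type} {ar : ι → ℕ} {α : Type} (L : ExpLoop ι ar α) (n : ℕ) : Prop :=
  (∀ p : Σ k : ℕ, (Fin k → α) → α,
      (∃ i : ι, p = ⟨ar i, L.extra i⟩) ↔
        (1 ≤ p.1 ∧ p.1 ≤ n - 1 ∧ IsPolynomial L.toAlgebra p.2 ∧
          Absorbs L.toAlgebra p.2 (fun _ => L.zero) L.zero)) ∧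
  (∀ f : (Fin (n - 1) → α) → α,
      IsPolynomial L.toAlgebra f → Absorbs L.toAlgebra f (fun _ => L.zero) L.zero →
      ∀ (j : Fin (n - 1)) (x : Fin (n - 1) → α) (u v : α),
        f (Function.update x j (L.mul u v)) =
          L.mul (f (Function.update x j u)) (f (Function.update x j v))) ∧
  (∀ k : ℕ, 2 ≤ k → k < n →
      commList (Fin.snoc (fun _ : Fin (n - k) => (Con.top : Con L.toAlgebra))
        (nfold Con.top k)) = Con.bot)

/-- `A` is polynomially equivalent to an `n`-type expanded loop on the same carrier. -/
def PolyEquivNTypeLoop (A : Algebra σ) (n : ℕ) : Prop :=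
  ∃ (ι : Type) (ar : ι → ℕ) (L : ExpLoop ι ar A.carrier),
    L.IsNType n ∧
    ∀ (k : ℕ) (f : (Fin k → A.carrier) → A.carrier),
      IsPolynomial A f ↔ IsPolynomial L.toAlgebra f

/-- Left-associated product of a list with initial value `c`. -/
def lprodFrom {β : Type} (mul : β → β → β) (c : β) (l : List β) : β := List.foldl mul c l

/-- Left-associated product of a list (with a default value for the empty list). -/
def lprodList {β : Type} (mul : β → β → β) (dflt : β) : List β → β
  | [] => dflt
  | a :: l => List.foldl mul a l

/-- Left-associated product of a nonempty tuple. -/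
def lassoc {β : Type} (mul : β → β → β) : {m : ℕ} → (Fin (m + 1) → β) → β
  | 0, y => y 0
  | (m+1), y => mul (lassoc mul (Fin.init y)) (y (Fin.last (m+1)))

/-- `A` has a representation of degree `n`. -/
def HasRepOfDegree (A : Algebra σ) (n : ℕ) : Prop :=
  ∃ (z : A.carrier) (r : (Fin 2 → A.carrier) → A.carrier),
    IsPolynomial A r ∧ (∀ x : A.carrier, r ![z, x] = x) ∧ (∀ x : A.carrier, r ![x, z] = x) ∧
    ∀ (k : ℕ) (f : (Fin k → A.carrier) → A.carrier), IsPolynomial A f →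
      ∃ (c : A.carrier) (R : ℕ → (Fin k → A.carrier) → A.carrier),
        (∀ m : ℕ, 1 ≤ m → m ≤ min k n →
          ∃ (l : List (Finset (Fin k)))
            (t : (S : Finset (Fin k)) → (Fin S.card → A.carrier) → A.carrier),
            l.Nodup ∧
            (∀ S : Finset (Fin k), S ∈ l ↔ S.card = m) ∧
            (∀ S ∈ l, IsPolynomial A (t S) ∧ Absorbs A (t S) (fun _ => z) z) ∧
            (∀ x : Fin k → A.carrier,
              R m x = lprodList (fun u v => r ![u, v]) z
                (l.map (fun S => t S (fun j => x ((S.orderIsoOfFin rfl j).val)))))) ∧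
        ∀ x : Fin k → A.carrier,
          f x = lprodFrom (fun u v => r ![u, v]) c
            ((List.range' 1 (min k n)).map (fun m => R m x))

/-- Products of `0`-absorbing polynomials (of arities between `lo` and `hi`)
in a given set of variables. -/
inductive ProdOfAbs {ι : Type} {ar : ι → ℕ} {α : Type} (L : ExpLoop ι ar α)
    (lo hi : ℕ) {I : Type} : ((I → α) → α) → Prop
  | base {p : ℕ} (h : (Fin p → α) → α) (sel : Fin p → I) :
      lo ≤ p → p ≤ hi → IsPolynomial L.toAlgebra h →
      Absorbs L.toAlgebra h (fun _ => L.zero) L.zero →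
      ProdOfAbs L lo hi (fun v => h (fun j => v (sel j)))
  | mul {F G : (I → α) → α} :
      ProdOfAbs L lo hi F → ProdOfAbs L lo hi G →
      ProdOfAbs L lo hi (fun v => L.mul (F v) (G v))

/-- The terms `q_m` (for `m ≥ 2`, `qSeq q (m-2)` is `q_m`):
`q₂ := q`, `q_{m+1}(x,y,z) := q(x, q_m(x,y,y), q_m(x,y,z))`. -/
def qSeq (q : Term σ (Fin 3)) : ℕ → Term σ (Fin 3)
  | 0 => q
  | (k+1) => q.subst ![Term.var 0, (qSeq q k).subst ![Term.var 0, Term.var 1, Term.var 1], qSeq q k]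

/-!
In a finite algebra some term of the derived series of `θ` lies below every `[θ,…,θ]_n`. Otherwise
a prime quotient `α ⋖ ρ` has `ρ = [ρ,ρ]` and carries a supernilpotence condition on `ρ`-cubes; on a
minimal set of `(α, ρ)`, in the sense of tame congruence theory, every unary polynomial is a
permutation or collapses `ρ` into `α`, and the cube condition makes this alternative the same for
all parameters in a `ρ`-class. A failure of `[ρ,ρ] ≤ α` would yield a binary polynomial on the
minimal set that acts like an addition, and subtracting with it produces a polynomial that is a
permutation for one choice of parameters but not for another.

If `q` is a weak difference term, each application of `w ↦ q(x,w,w)` in `F_V(2)` takes an element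
congruent to `x` modulo one term of the derived series of `θ(x,y)` to an element congruent to `x`
modulo the next. As `F_V(2)` is finite, an iterate of this map is idempotent, so its value at `y` is
congruent to `x` modulo the whole derived series, and the terms `q_m` express such iterates.
Applying the same construction to the term with reversed variables repairs the other condition
without spoiling the first. Homomorphisms out of `F_V(2)` carry both to all members of `V`.

The conditions for `n` and the Mal'cev property are exchanged by passing to the quotient by
`[θ,…,θ]_n`.
-/

/-! ### Finite sets: iterates and tuples -/

section Finite

variable {X : Type*}

theorem exists_iterate_idempotent [Finite X] :
    ∃ k : ℕ, ∀ (f : X → X) (x : X), f^[k + 1] (f^[k + 1] x) = f^[k + 1] x := by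
  obtain ⟨i, j, hij, heq⟩ : ∃ i j, i < j ∧ ∀ f : X → X, f^[i] = f^[j] := by
    obtain ⟨i, j, hne, heq⟩ :=
      Finite.exists_ne_map_eq_of_infinite fun (n : ℕ) (f : X → X) => f^[n]
    rcases hne.lt_or_gt with h | h
    exacts [⟨i, j, h, congrFun heq⟩, ⟨j, i, h, congrFun heq.symm⟩]
  obtain ⟨d, rfl⟩ := Nat.exists_eq_add_of_lt hij
  have periodic (f : X → X) (m t : ℕ) : f^[m + i + t * (d + 1)] = f^[m + i] := by
    induction t with
    | zero => simp
    | succ t ih =>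
      rw [← ih, show m + i + (t + 1) * (d + 1) = m + t * (d + 1) + (i + d + 1) by ring,
        Function.iterate_add, ← heq, ← Function.iterate_add, Nat.add_right_comm]
  refine ⟨d + i * d + i, fun f x => ?_⟩
  rw [← Function.iterate_add_apply]
  convert congrFun (periodic f (d + i * d + 1) (i + 1)) x using 2 <;> ring_nf

theorem iterate_eq_self_of_injOn {f : X → X} {U : Set X} (hmaps : Set.MapsTo f U U)
    (hinj : Set.InjOn f U) {k : ℕ} (hk : ∀ x, f^[k] (f^[k] x) = f^[k] x) {x : X} (hx : x ∈ U) :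
    f^[k] x = x :=
  hinj.iterate hmaps k (hmaps.iterate k hx) hx (hk x)

theorem exists_iterate_inverse [Finite X] (U : Set X) :
    ∃ k : ℕ, ∀ f : X → X, Set.MapsTo f U U → Set.InjOn f U →
      ∀ x ∈ U, f (f^[k] x) = x ∧ f^[k] (f x) = x := by
  obtain ⟨k, hk⟩ := exists_iterate_idempotent (X := X)
  refine ⟨k, fun f hmaps hinj x hx => ?_⟩
  rw [← Function.iterate_succ_apply' f, ← Function.iterate_succ_apply f, and_self]
  exact iterate_eq_self_of_injOn hmaps hinj (hk f) hx

theorem rel_of_forall_eqvGen {ι : Type*} [Finite ι] [DecidableEq ι] (s : Setoid (ι → X))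
    {step : X → X → Prop}
    (hstep : ∀ t i x y, step x y → s (Function.update t i x) (Function.update t i y))
    {a b : ι → X} (hab : ∀ i, Relation.EqvGen step (a i) (b i)) : s a b := by
  classical
  have := Fintype.ofFinite ι
  have hupdate (t : ι → X) (i : ι) {x y : X} (hxy : Relation.EqvGen step x y) :
      s (Function.update t i x) (Function.update t i y) :=
    Setoid.eqvGen_le (s := s.comap (Function.update t i)) (hstep t i) hxy
  suffices ∀ F : Finset ι, s a (F.piecewise b a) by simpa using this Finset.univ
  intro F
  induction F using Finset.induction_on with
  | empty => simp
  | insert i F hi ih =>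
    have h := hupdate (F.piecewise b a) i (hab i)
    rw [← Finset.piecewise_insert, Finset.update_piecewise_of_notMem _ _ _ hi,
      Function.update_eq_self] at h
    exact s.trans ih h

end Finite

/-! ### Congruences, terms and polynomials -/

section Basic

variable {A : Algebra σ}

instance : PartialOrder (Con A) where
  le_refl _ _ _ hab := hab
  le_trans _ _ _ h h' a b hab := h' a b (h a b hab)
  lt_iff_le_not_ge _ _ := Iff.rfl
  le_antisymm c d h h' := by
    have : c.r = d.r := by
      ext a b
      exact ⟨h a b, h' a b⟩
    cases c
    cases d
    cases this
    rfl

theorem Con.r_injective : Function.Injective (Con.r : Con A → _) := fun _ _ h =>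
  le_antisymm (fun _ _ hab => h ▸ hab) fun _ _ hab => h ▸ hab

instance [Finite A.carrier] : Finite (Con A) := Finite.of_injective _ Con.r_injective

theorem Con.eq_bot_of_le {c : Con A} (h : c ≤ bot) : c = bot :=
  le_antisymm h fun _ _ hab => hab ▸ c.refl _

/-- An equivalence relation preserved by every basic operation in each single argument, as a
congruence. -/
def Con.ofUpdate (s : Setoid A.carrier)
    (h : ∀ (o : σ.ops) t i x y, s x y →
      s (A.interp o (Function.update t i x)) (A.interp o (Function.update t i y))) : Con A where
  r := s
  refl := s.refl
  symm := s.symm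
  trans := s.trans
  compat o _ _ hxy := rel_of_forall_eqvGen (s.comap (A.interp o)) (step := s) (h o)
    fun i => .rel _ _ (hxy i)

theorem Con.update_rel {ι : Type*} [DecidableEq ι] (c : Con A) {x y : A.carrier} (h : c.r x y)
    (t : ι → A.carrier) (i j : ι) : c.r (Function.update t i x j) (Function.update t i y j) := by
  by_cases hj : j = i
  · subst hj
    simpa using h
  · simpa [hj] using c.refl _

theorem conPair_le {γ : Con A} {a b : A.carrier} (h : γ.r a b) : conPair A a b ≤ γ :=
  fun _ _ hxy => hxy γ fun _ hp => hp ▸ h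

theorem conPair_rel (a b : A.carrier) : (conPair A a b).r a b := fun _ hc => hc (a, b) rfl

theorem IsPolynomial.map_rel (β : Con A) {N : ℕ} {p : (Fin N → A.carrier) → A.carrier}
    (hp : IsPolynomial A p) {s t : Fin N → A.carrier} (h : ∀ i, β.r (s i) (t i)) :
    β.r (p s) (p t) := by
  induction hp with
  | proj i => exact h i
  | const a => exact β.refl a
  | app o g _ ih => exact β.compat o _ _ ih

theorem Term.eval_rel (β : Con A) {X : Type} (t : Term σ X) {v w : X → A.carrier}
    (h : ∀ i, β.r (v i) (w i)) : β.r (t.eval A v) (t.eval A w) := by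
  induction t with
  | var x => exact h x
  | app o t ih => exact β.compat o _ _ ih

theorem Term.eval_subst {X Y : Type} (t : Term σ X) (s : X → Term σ Y) (v : Y → A.carrier) :
    (t.subst s).eval A v = t.eval A (Term.eval A v ∘ s) := by
  induction t with
  | var x => rfl
  | app o t ih => simp only [Term.subst, Term.eval, ih]

end Basic

/-! ### Twins and cubes -/

/-- Pairs of unary polynomials arising from one polynomial by substituting two tuples of
`ρ`-related parameters. In particular `Twin ρ f f` says that `f` is a unary polynomial. -/
inductive Twin {A : Algebra σ} (ρ : Con A) :
    (A.carrier → A.carrier) → (A.carrier → A.carrier) → Prop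
  | id : Twin ρ (fun z => z) (fun z => z)
  | const {a b : A.carrier} : ρ.r a b → Twin ρ (fun _ => a) (fun _ => b)
  | app (o : σ.ops) (f g : Fin (σ.arity o) → A.carrier → A.carrier) :
      (∀ j, Twin ρ (f j) (g j)) →
      Twin ρ (fun z => A.interp o fun j => f j z) (fun z => A.interp o fun j => g j z)

/-- The `n`-dimensional cubes of elements generated by the edges of `ρ`: the subalgebra of
`A ^ (2 ^ n)` whose generators are the `ρ`-related pairs spread out in one of the directions. -/
inductive Cube {A : Algebra σ} (ρ : Con A) (n : ℕ) : ((Fin n → Bool) → A.carrier) → Prop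
  | edge (i : Fin n) {a b : A.carrier} : ρ.r a b → Cube ρ n (fun ε => if ε i then b else a)
  | const (a : A.carrier) : Cube ρ n (fun _ => a)
  | app (o : σ.ops) (C : Fin (σ.arity o) → (Fin n → Bool) → A.carrier) :
      (∀ j, Cube ρ n (C j)) → Cube ρ n (fun ε => A.interp o fun j => C j ε)

/-- The consequence of supernilpotence that drives the argument: a `ρ`-cube constant away from its
top corner is constant modulo `α`. -/
def CornerCondition {A : Algebra σ} (ρ α : Con A) (n : ℕ) : Prop :=
  ∀ C, Cube ρ n C → ∀ c, (∀ ε, ε ≠ (fun _ => true) → C ε = c) → α.r c (C fun _ => true)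

section Twin

variable {A : Algebra σ} {ρ : Con A} {f g f' g' : A.carrier → A.carrier}

theorem Twin.left (h : Twin ρ f g) : Twin ρ f f := by
  induction h with
  | id => exact .id
  | const _ => exact .const (ρ.refl _)
  | app o f _ _ ih => exact .app o f f ih

theorem Twin.right (h : Twin ρ f g) : Twin ρ g g := by
  induction h with
  | id => exact .id
  | const _ => exact .const (ρ.refl _)
  | app o _ g _ ih => exact .app o g g ih

theorem Twin.comp (h : Twin ρ f g) (h' : Twin ρ f' g') :
    Twin ρ (fun z => f (f' z)) (fun z => g (g' z)) := by
  induction h with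
  | id => exact h'
  | const h => exact .const h
  | app o f g _ ih => exact .app o (fun j z => f j (f' z)) (fun j z => g j (g' z)) ih

theorem Twin.iterate (h : Twin ρ f g) : ∀ k : ℕ, Twin ρ f^[k] g^[k]
  | 0 => .id
  | k + 1 => (h.iterate k).comp h

theorem Twin.rel (h : Twin ρ f g) (z : A.carrier) : ρ.r (f z) (g z) := by
  induction h with
  | id => exact ρ.refl _
  | const h => exact h
  | app o f g _ ih => exact ρ.compat o _ _ ih

theorem Twin.map_rel (h : Twin ρ f g) (β : Con A) {x y : A.carrier} (hxy : β.r x y) :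
    β.r (f x) (f y) := by
  induction h with
  | id => exact hxy
  | const _ => exact β.refl _
  | app o _ _ _ ih => exact β.compat o _ _ ih

theorem Twin.update {ι : Type*} [DecidableEq ι] (h : Twin ρ f g) (t : ι → A.carrier) (i j : ι) :
    Twin ρ (fun z => Function.update t i (f z) j) (fun z => Function.update t i (g z) j) := by
  by_cases hj : j = i
  · subst hj
    simpa using h
  · simpa [hj] using Twin.const (ρ.refl _)

theorem Twin.translation (ρ : Con A) (o : σ.ops) (t : Fin (σ.arity o) → A.carrier)
    (i : Fin (σ.arity o)) :
    Twin ρ (fun z => A.interp o (Function.update t i z))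
      (fun z => A.interp o (Function.update t i z)) :=
  .app o _ _ fun j => Twin.id.update t i j

theorem IsPolynomial.twin {N : ℕ} {p : (Fin N → A.carrier) → A.carrier} (hp : IsPolynomial A p)
    {φ ψ : Fin N → A.carrier → A.carrier} (h : ∀ j, Twin ρ (φ j) (ψ j)) :
    Twin ρ (fun z => p fun j => φ j z) (fun z => p fun j => ψ j z) := by
  induction hp with
  | proj i => exact h i
  | const a => exact .const (ρ.refl a)
  | app o g _ ih => exact .app o _ _ ih

end Twin

section Cube

variable {A : Algebra σ} {ρ α : Con A} {n : ℕ} {C : (Fin n → Bool) → A.carrier}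

theorem Cube.rel (hC : Cube ρ n C) (ε ε' : Fin n → Bool) : ρ.r (C ε) (C ε') := by
  induction hC with
  | edge i h =>
    beta_reduce
    split <;> split
    exacts [ρ.refl _, ρ.symm h, h, ρ.refl _]
  | const a => exact ρ.refl a
  | app o C _ ih => exact ρ.compat o _ _ ih

theorem Cube.splice (hC : Cube ρ n C) {f g : A.carrier → A.carrier} (h : Twin ρ f g) (i : Fin n) :
    Cube ρ n (fun ε => if ε i then f (C ε) else g (C ε)) := by
  induction h with
  | id => simpa using hC
  | const h => exact .edge i (ρ.symm h)
  | app o f g _ ih =>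
    convert Cube.app o _ ih using 2
    split <;> rfl

theorem Cube.exists_isPolynomial [Finite A.carrier] (ρ : Con A) (n : ℕ) :
    ∃ (N : ℕ) (g : Fin N → Fin n) (a b : Fin N → A.carrier), (∀ i, ρ.r (a i) (b i)) ∧
      ∀ C, Cube ρ n C → ∃ p, IsPolynomial A p ∧ ∀ ε, C ε = p (chooseVec g a b ε) := by
  obtain ⟨N, ⟨E⟩⟩ :=
    Finite.exists_equiv_fin {t : Fin n × A.carrier × A.carrier // ρ.r t.2.1 t.2.2}
  refine ⟨N, fun i => (E.symm i).1.1, fun i => (E.symm i).1.2.1, fun i => (E.symm i).1.2.2,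
    fun i => (E.symm i).2, fun C hC => ?_⟩
  induction hC with
  | @edge i a b h =>
    exact ⟨_, .proj (E ⟨(i, a, b), h⟩), fun ε => by simp [chooseVec]⟩
  | const a => exact ⟨_, .const a, fun ε => rfl⟩
  | app o C _ ih =>
    choose p hp hpC using ih
    exact ⟨_, .app o p hp, fun ε => by simp only [hpC]⟩

theorem lastCases_const {X : Type*} {n : ℕ} (c : X) (j : Fin (n + 1)) :
    Fin.lastCases (motive := fun _ => X) c (fun _ => c) j = c := by
  cases j using Fin.lastCases <;> simp

theorem CornerCondition.of_centralizes [Finite A.carrier] {θ δ : Con A}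
    (h : Centralizes (fun _ : Fin n => θ) θ δ) (hρ : ρ ≤ θ) (hα : ρ.inf δ ≤ α) :
    CornerCondition ρ α (n + 1) := by
  intro C hC c hc
  obtain ⟨N, g, a, b, hab, hrep⟩ := Cube.exists_isPolynomial ρ (n + 1)
  obtain ⟨p, hp, hpC⟩ := hrep C hC
  have lastCases_ne (t : Bool) {ε : Fin n → Bool} (hε : ε ≠ fun _ => true) :
      (Fin.lastCases (motive := fun _ => Bool) t ε) ≠ fun _ => true :=
    fun h => hε <| funext fun i => by simpa using congrFun h i.castSucc
  have top_eq : (Fin.lastCases (motive := fun _ => Bool) true fun _ : Fin n => true) =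
      fun _ => true := funext (lastCases_const true)
  have side_ne : (Fin.lastCases (motive := fun _ => Bool) false fun _ : Fin n => true) ≠
      fun _ => true := fun h => by simpa using congrFun h (Fin.last n)
  have corner := h N p hp g a b (fun i => by simpa only [lastCases_const] using hρ _ _ (hab i))
    fun ε hε => by
      rw [← hpC, ← hpC, hc _ (lastCases_ne _ hε), hc _ (lastCases_ne _ hε)]
      exact δ.refl _
  rw [← hpC, ← hpC, top_eq, hc _ side_ne] at corner
  exact hα _ _ ⟨hc _ side_ne ▸ hC.rel _ _, corner⟩

theorem CornerCondition.rel_of_twin (H : CornerCondition ρ α n) {f g : A.carrier → A.carrier}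
    (h : Twin ρ f g) {x : A.carrier} (hfx : f x = x) (hgg : g (g x) = g x) (hfg : f (g x) = g x) :
    α.r (g x) x := by
  have cube (s : Finset (Fin n)) : Cube ρ n fun ε => if ∀ i ∈ s, ε i = true then x else g x := by
    induction s using Finset.induction_on with
    | empty => simpa using Cube.const x
    | insert i s _ ih =>
      convert ih.splice h i using 2 with ε
      simp only [Finset.forall_mem_insert]
      by_cases hs : ∀ j ∈ s, ε j = true
      · simp only [if_pos hs, and_iff_left hs, hfx]
      · simp only [if_neg hs, mt And.right hs, if_false, hfg, hgg, ite_self]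
  have corner := H _ (cube Finset.univ) (g x) fun ε hε =>
    if_neg fun hall => hε <| funext fun i => hall i (Finset.mem_univ i)
  simpa using corner

end Cube

/-! ### Minimal sets -/

section MinimalSets

variable {A : Algebra σ}

/-- `f` maps `ρ`-related elements of `U` to `α`-related elements. -/
def Collapses (ρ α : Con A) (f : A.carrier → A.carrier) (U : Set A.carrier) : Prop :=
  ∀ x ∈ U, ∀ y ∈ U, ρ.r x y → α.r (f x) (f y)

/-- Minimal sets of the congruence pair `α ≤ ρ` in the sense of tame congruence theory, described
by the properties that the argument needs. -/
structure IsMinimalSet (ρ α : Con A) (U : Set A.carrier) : Prop where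
  exists_rel_not_rel : ∃ x ∈ U, ∃ y ∈ U, ρ.r x y ∧ ¬α.r x y
  collapses_or_injOn : ∀ f, Twin ρ f f → Collapses ρ α f U ∨ Set.InjOn f U
  exists_separating : ∀ x y, ρ.r x y → ¬α.r x y →
    ∃ h, Twin ρ h h ∧ (∀ z, h z ∈ U) ∧ ¬α.r (h x) (h y)

/-- The steps generating `ρ` above `α`: the `α`-related pairs and the polynomial images of the
`ρ`-related pairs of `U`. -/
inductive TraceStep (ρ α : Con A) (U : Set A.carrier) : A.carrier → A.carrier → Prop
  | base {x y : A.carrier} : α.r x y → TraceStep ρ α U x y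
  | image {g : A.carrier → A.carrier} {u v : A.carrier} : Twin ρ g g → u ∈ U → v ∈ U → ρ.r u v →
      TraceStep ρ α U (g u) (g v)

variable {ρ α : Con A} {U : Set A.carrier} {f g : A.carrier → A.carrier}

theorem exists_twin_not_rel (hcov : α ⋖ ρ) (hf : Twin ρ f f) (hfn : ¬Collapses ρ α f Set.univ)
    {x y : A.carrier} (hxy : ρ.r x y) (hn : ¬α.r x y) :
    ∃ h, Twin ρ h h ∧ ¬α.r (f (h x)) (f (h y)) := by
  let μ : Con A := Con.ofUpdate
    { r x y := ρ.r x y ∧ ∀ h, Twin ρ h h → α.r (f (h x)) (f (h y))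
      iseqv :=
        { refl x := ⟨ρ.refl x, fun h _ => α.refl _⟩
          symm hxy := ⟨ρ.symm hxy.1, fun h hh => α.symm (hxy.2 h hh)⟩
          trans hxy hyz :=
            ⟨ρ.trans hxy.1 hyz.1, fun h hh => α.trans (hxy.2 h hh) (hyz.2 h hh)⟩ } }
    fun o t i x y hxy => ⟨(Twin.translation ρ o t i).map_rel ρ hxy.1,
      fun h hh => hxy.2 _ (hh.comp (Twin.translation ρ o t i))⟩
  have hαμ : α ≤ μ := fun x y hxy =>
    ⟨hcov.le _ _ hxy, fun h hh => hf.map_rel α (hh.map_rel α hxy)⟩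
  have hμρ : μ ≤ ρ := fun x y hxy => hxy.1
  by_contra! hall
  rcases hcov.eq_or_eq hαμ hμρ with heq | heq
  · exact hn (heq.le x y ⟨hxy, hall⟩)
  · exact hfn fun x _ y _ hxy => (heq.ge x y hxy).2 _ .id

theorem exists_idempotent_twin [Finite A.carrier] (hcov : α ⋖ ρ) :
    ∃ e, Twin ρ e e ∧ (∀ x, e (e x) = e x) ∧ ¬Collapses ρ α e Set.univ ∧
      ∀ g, Twin ρ g g → ¬Collapses ρ α g Set.univ →
        (Set.range e).ncard ≤ (Set.range g).ncard := by
  obtain ⟨f, ⟨hf, hfn⟩, hmin⟩ := Set.exists_min_image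
    {f | Twin ρ f f ∧ ¬Collapses ρ α f Set.univ} (fun f => (Set.range f).ncard) (Set.toFinite _)
    ⟨fun z => z, .id, fun h => hcov.lt.2 fun x y => h x trivial y trivial⟩
  obtain ⟨x, y, hxy, hn⟩ : ∃ x y, ρ.r x y ∧ ¬α.r (f x) (f y) := by
    simpa [Collapses] using hfn
  obtain ⟨h, hh, hne⟩ := exists_twin_not_rel hcov hf hfn (hf.map_rel ρ hxy) hn
  set t := f ∘ h
  have hmaps : Set.MapsTo t (Set.range f) (Set.range f) := fun z _ => ⟨h z, rfl⟩
  have hinj : Set.InjOn t (Set.range f) := by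
    have hle := hmin (t ∘ f) ⟨(hf.comp hh).comp hf, fun hc => hne (hc x trivial y trivial hxy)⟩
    rw [Set.range_comp] at hle
    exact Set.injOn_of_ncard_image_eq (le_antisymm Set.ncard_image_le hle)
  obtain ⟨k, hk⟩ := exists_iterate_idempotent (X := A.carrier)
  have hfix (z : A.carrier) : t^[k + 1] (f z) = f z :=
    iterate_eq_self_of_injOn hmaps hinj (hk t) ⟨z, rfl⟩
  have hrange : Set.range t^[k + 1] ⊆ Set.range f := by
    rintro _ ⟨z, rfl⟩
    rw [Function.iterate_succ_apply']
    exact ⟨_, rfl⟩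
  refine ⟨t^[k + 1], (hf.comp hh).iterate _, hk t, fun hc => hn ?_, fun g hg hgn =>
    (Set.ncard_le_ncard hrange).trans (hmin g ⟨hg, hgn⟩)⟩
  simpa only [hfix] using hc (f x) trivial (f y) trivial (hf.map_rel ρ hxy)

theorem exists_isMinimalSet [Finite A.carrier] (hcov : α ⋖ ρ) : ∃ U, IsMinimalSet ρ α U := by
  obtain ⟨e, he, hee, hen, hmin⟩ := exists_idempotent_twin hcov
  obtain ⟨x, y, hxy, hn⟩ : ∃ x y, ρ.r x y ∧ ¬α.r (e x) (e y) := by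
    simpa [Collapses] using hen
  refine ⟨Set.range e, ⟨_, ⟨x, rfl⟩, _, ⟨y, rfl⟩, he.map_rel ρ hxy, hn⟩, fun g hg => ?_,
    fun x y hxy hn => ?_⟩
  · refine or_iff_not_imp_left.2 fun hgn => ?_
    have hle := hmin _ (hg.comp he) fun hc => hgn <| by
      rintro _ ⟨x, rfl⟩ _ ⟨y, rfl⟩ hxy
      simpa only [hee] using hc _ trivial _ trivial hxy
    rw [Set.range_comp' g] at hle
    exact Set.injOn_of_ncard_image_eq (le_antisymm Set.ncard_image_le hle)
  · obtain ⟨h, hh, hne⟩ := exists_twin_not_rel hcov he hen hxy hn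
    exact ⟨_, he.comp hh, fun z => ⟨h z, rfl⟩, hne⟩

theorem IsMinimalSet.eqvGen_traceStep (hcov : α ⋖ ρ) (hU : IsMinimalSet ρ α U) {x y : A.carrier}
    (hxy : ρ.r x y) : Relation.EqvGen (TraceStep ρ α U) x y := by
  let μ : Con A := Con.ofUpdate (Relation.EqvGen.setoid (TraceStep ρ α U)) fun o t i x y hxy => by
    refine Setoid.eqvGen_le (s := (Relation.EqvGen.setoid _).comap
      fun z => A.interp o (Function.update t i z)) (fun x y hxy => ?_) hxy
    refine .rel _ _ ?_
    cases hxy with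
    | base h => exact .base ((Twin.translation ρ o t i).map_rel α h)
    | image hg hu hv huv => exact .image ((Twin.translation ρ o t i).comp hg) hu hv huv
  have hαμ : α ≤ μ := fun x y hxy => .rel _ _ (.base hxy)
  have hμρ : μ ≤ ρ := fun x y hxy => Setoid.eqvGen_le (s := ρ.toSetoid) (fun x y hxy => by
    cases hxy with
    | base h => exact hcov.le _ _ h
    | image hg hu hv huv => exact hg.map_rel ρ huv) hxy
  rcases hcov.eq_or_eq hαμ hμρ with heq | heq
  · obtain ⟨u, hu, v, hv, huv, hn⟩ := hU.exists_rel_not_rel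
    exact absurd (heq.le u v (.rel _ _ (.image .id hu hv huv))) hn
  · exact heq.ge x y hxy

theorem IsMinimalSet.injOn_of_twin [Finite A.carrier] {n : ℕ} (hU : IsMinimalSet ρ α U)
    (H : CornerCondition ρ α n) (h : Twin ρ f g) (hf : Set.MapsTo f U U) (hg : Set.MapsTo g U U)
    (hinj : Set.InjOn f U) : Set.InjOn g U := by
  obtain ⟨k, hk⟩ := exists_iterate_idempotent (X := A.carrier)
  refine (hU.collapses_or_injOn g h.right).resolve_left fun hcol => ?_
  obtain ⟨x, hx, y, hy, hxy, hn⟩ := hU.exists_rel_not_rel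
  have hfix {z : A.carrier} (hz : z ∈ U) : f^[k + 1] z = z :=
    iterate_eq_self_of_injOn hf hinj (hk f) hz
  have hrel {z : A.carrier} (hz : z ∈ U) : α.r (g^[k + 1] z) z :=
    H.rel_of_twin (h.iterate _) (hfix hz) (hk g z) (hfix (hg.iterate _ hz))
  have hgk : α.r (g^[k + 1] x) (g^[k + 1] y) :=
    (h.right.iterate k).map_rel α (hcol x hx y hy hxy)
  exact hn (α.trans (α.symm (hrel hx)) (α.trans hgk (hrel hy)))

end MinimalSets

/-! ### Supernilpotent prime quotients are abelian -/

section PrimeQuotient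

variable {A : Algebra σ} {ρ α : Con A} {U : Set A.carrier}

/-- The operations in an element and a tuple that act on twins. -/
def PreservesTwins (ρ : Con A) {ι : Type*} (F : A.carrier → (ι → A.carrier) → A.carrier) : Prop :=
  ∀ ⦃f g⦄ ⦃φ ψ : ι → A.carrier → A.carrier⦄, Twin ρ f g → (∀ j, Twin ρ (φ j) (ψ j)) →
    Twin ρ (fun z => F (f z) fun j => φ j z) (fun z => F (g z) fun j => ψ j z)

/-- The binary operations that act on twins. -/
def PreservesTwins₂ (ρ : Con A) (G : A.carrier → A.carrier → A.carrier) : Prop :=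
  ∀ ⦃f g f' g'⦄, Twin ρ f g → Twin ρ f' g' →
    Twin ρ (fun z => G (f z) (f' z)) (fun z => G (g z) (g' z))

section Operations

variable {ι : Type*} {F : A.carrier → (ι → A.carrier) → A.carrier}
  {G : A.carrier → A.carrier → A.carrier} {h : A.carrier → A.carrier}

theorem PreservesTwins.twin (hF : PreservesTwins ρ F) {c d : ι → A.carrier}
    (hcd : ∀ j, ρ.r (c j) (d j)) : Twin ρ (fun z => F z c) (fun z => F z d) :=
  hF .id fun j => .const (hcd j)

theorem PreservesTwins.comp (hF : PreservesTwins ρ F) (hh : Twin ρ h h) :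
    PreservesTwins ρ (fun z w => h (F z w)) := fun _ _ _ _ hf hφ => hh.comp (hF hf hφ)

theorem PreservesTwins.update [DecidableEq ι] (hF : PreservesTwins ρ F) (hh : Twin ρ h h)
    (t : ι → A.carrier) (i : ι) : PreservesTwins₂ ρ (fun z w => F z (Function.update t i (h w))) :=
  fun _ _ _ _ hf hf' => hF hf fun j => (hh.comp hf').update t i j

theorem PreservesTwins₂.twin_left (hG : PreservesTwins₂ ρ G) (w : A.carrier) :
    Twin ρ (fun z => G z w) (fun z => G z w) :=
  hG .id (.const (ρ.refl w))

theorem PreservesTwins₂.twin_right (hG : PreservesTwins₂ ρ G) {a b : A.carrier} (hab : ρ.r a b) :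
    Twin ρ (G a) (G b) :=
  hG (.const hab) .id

theorem PreservesTwins₂.comp (hG : PreservesTwins₂ ρ G) (hh : Twin ρ h h) :
    PreservesTwins₂ ρ (fun z w => h (G z w)) := fun _ _ _ _ hf hf' => hh.comp (hG hf hf')

theorem PreservesTwins₂.iterate (hG : PreservesTwins₂ ρ G) (k : ℕ) :
    PreservesTwins₂ ρ (fun z w => (G z)^[k] w) := by
  intro f g f' g' hf hf'
  induction k with
  | zero => exact hf'
  | succ k ih =>
    simp only [Function.iterate_succ_apply']
    exact hG hf ih

end Operations

namespace IsMinimalSet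

variable [Finite A.carrier] {n : ℕ} {ι : Type*} [Finite ι]
  {F : A.carrier → (ι → A.carrier) → A.carrier} {c d : ι → A.carrier} {x y : A.carrier}

theorem exists_injOn_injOn (hcov : α ⋖ ρ) (hU : IsMinimalSet ρ α U) (H : CornerCondition ρ α n)
    (hF : PreservesTwins ρ F) (hFU : ∀ z w, F z w ∈ U) (hcd : ∀ j, ρ.r (c j) (d j))
    (hinj : Set.InjOn (fun z => F z c) U) (hn : ¬α.r (F y c) (F y d)) :
    ∃ G u, PreservesTwins₂ ρ G ∧ (∀ z w, G z w ∈ U) ∧ u ∈ U ∧ Set.InjOn (G y) U ∧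
      Set.InjOn (fun z => G z u) U := by
  classical
  by_contra! hnone
  let s : Setoid (ι → A.carrier) :=
    { r t t' := (∀ j, ρ.r (t j) (t' j)) ∧ ((∀ j, ρ.r (c j) (t j)) → α.r (F y t) (F y t'))
      iseqv :=
        { refl _ := ⟨fun _ => ρ.refl _, fun _ => α.refl _⟩
          symm h := ⟨fun j => ρ.symm (h.1 j),
            fun hc => α.symm (h.2 fun j => ρ.trans (hc j) (ρ.symm (h.1 j)))⟩
          trans h h' := ⟨fun j => ρ.trans (h.1 j) (h'.1 j),
            fun hc => α.trans (h.2 hc) (h'.2 fun j => ρ.trans (hc j) (h.1 j))⟩ } }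
  suffices hs : s c d from hn (hs.2 fun j => ρ.refl _)
  refine rel_of_forall_eqvGen s (fun t i v v' hstep => ?_) fun j =>
    hU.eqvGen_traceStep hcov (hcd j)
  cases hstep with
  | base h =>
    exact ⟨ρ.update_rel (hcov.le _ _ h) t i,
      fun _ => ((hF.update .id t i).twin_right (ρ.refl y)).map_rel α h⟩
  | @image g u v hg hu hv huv =>
    refine ⟨ρ.update_rel (hg.map_rel ρ huv) t i, fun hct => ?_⟩
    have hG := hF.update hg t i
    refine (hU.collapses_or_injOn _ (hG.twin_right (ρ.refl y))).elim
      (fun hcol => hcol u hu v hv huv) fun hGy =>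
        absurd ?_ (hnone _ u hG (fun _ _ => hFU _ _) hu hGy)
    exact hU.injOn_of_twin H (hF.twin hct) (fun _ _ => hFU _ _) (fun _ _ => hFU _ _) hinj

theorem exists_injOn_right_unital (hcov : α ⋖ ρ) (hU : IsMinimalSet ρ α U)
    (H : CornerCondition ρ α n) (hF : PreservesTwins ρ F) (hFU : ∀ z w, F z w ∈ U)
    (hcd : ∀ j, ρ.r (c j) (d j)) (hinj : Set.InjOn (fun z => F z c) U)
    (hn : ¬α.r (F y c) (F y d)) :
    ∃ G u, PreservesTwins₂ ρ G ∧ (∀ z w, G z w ∈ U) ∧ u ∈ U ∧ Set.InjOn (G y) U ∧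
      ∀ z ∈ U, G z u = z := by
  obtain ⟨G, u, hG, hGU, hu, hGy, hGu⟩ := hU.exists_injOn_injOn hcov H hF hFU hcd hinj hn
  obtain ⟨k, hk⟩ := exists_iterate_inverse U
  have hmaps : Set.MapsTo (fun z => G z u) U U := fun z _ => hGU z u
  exact ⟨fun z w => (fun z => G z u)^[k] (G z w), u, hG.comp ((hG.twin_left u).iterate k),
    fun z w => hmaps.iterate k (hGU z w), hu,
    (hGu.iterate hmaps k).comp hGy fun w _ => hGU y w, fun z hz => (hk _ hmaps hGu z hz).2⟩

theorem rel_of_rel_of_eq_self (hcov : α ⋖ ρ) (hU : IsMinimalSet ρ α U) (H : CornerCondition ρ α n)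
    (hF : PreservesTwins ρ F) (hFU : ∀ z w, F z w ∈ U) (hcd : ∀ j, ρ.r (c j) (d j))
    (hid : ∀ z ∈ U, F z c = z) (hx : x ∈ U) (hy : y ∈ U) (hxy : ρ.r x y)
    (hFx : α.r (F x c) (F x d)) : α.r (F y c) (F y d) := by
  by_contra hn
  obtain ⟨G, u, hG, hGU, hu, hGy, hGu⟩ := hU.exists_injOn_right_unital hcov H hF hFU hcd
    (fun z hz w hw h => by simpa only [hid z hz, hid w hw] using h) hn
  obtain ⟨k, hk⟩ := exists_iterate_inverse U
  have hinv {b} (hb : ρ.r y b) : ∀ a ∈ U, G b ((G b)^[k] a) = a ∧ (G b)^[k] (G b a) = a :=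
    hk (G b) (fun a _ => hGU b a) <|
      hU.injOn_of_twin H (hG.twin_right hb) (fun a _ => hGU y a) (fun a _ => hGU b a) hGy
  have hrel {z} (hz : z ∈ U) (hzy : ρ.r z y) : ρ.r y (F z d) :=
    ρ.trans (ρ.symm hzy) (by simpa only [hid z hz] using (hF.twin hcd).rel z)
  -- `G z w` is read as `z + w`: the left twin sends `z` to `F z c - F z d + F y d`, and the right
  -- twin is constant near `y`.
  set T : A.carrier → A.carrier := fun z => (G (F z d))^[k] (F y d)
  have hT : Twin ρ T T := hG.iterate k (hF.twin fun _ => ρ.refl _) (.const (ρ.refl _))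
  have hD : Twin ρ (fun z => G (F z c) (T z)) (fun z => G (F z d) (T z)) := hG (hF.twin hcd) hT
  have right_x : G (F x d) (T x) = F y d := (hinv (hrel hx hxy) _ (hFU y d)).1
  have right_y : G (F y d) (T y) = F y d := (hinv (hrel hy (ρ.refl y)) _ (hFU y d)).1
  have left_x : α.r (G (F x c) (T x)) (F y d) := right_x ▸ (hG.twin_left (T x)).map_rel α hFx
  have left_y : G (F y c) (T y) = F y c := by
    have hTy : T y = u := by
      simpa only [hGu _ (hFU y d)] using (hinv (hrel hy (ρ.refl y)) u hu).2
    rw [hTy, hGu _ (hFU y c)]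
  rcases hU.collapses_or_injOn _ hD.left with hcol | hinj
  · exact hn (α.trans (α.symm (left_y ▸ hcol x hx y hy hxy)) left_x)
  · have hinj' := hU.injOn_of_twin H hD (fun _ _ => hGU _ _) (fun _ _ => hGU _ _) hinj
    have hxy : x = y := hinj' hx hy (right_x.trans right_y.symm)
    exact hn (hxy ▸ hFx)

theorem rel_of_rel (hcov : α ⋖ ρ) (hU : IsMinimalSet ρ α U) (H : CornerCondition ρ α n)
    (hF : PreservesTwins ρ F) (hcd : ∀ j, ρ.r (c j) (d j)) (hx : x ∈ U) (hy : y ∈ U)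
    (hxy : ρ.r x y) (hFx : α.r (F x c) (F x d)) : α.r (F y c) (F y d) := by
  by_contra hn
  obtain ⟨h, hh, hhU, hne⟩ := hU.exists_separating _ _ ((hF.twin hcd).rel y) hn
  have hF' := hF.comp hh
  have hmaps (w) : Set.MapsTo (fun z => h (F z w)) U U := fun z _ => hhU (F z w)
  have hinj : Set.InjOn (fun z => h (F z c)) U := by
    refine (hU.collapses_or_injOn _ (hF'.twin hcd).left).elim (fun hc => ?_) id
    rcases hU.collapses_or_injOn _ (hF'.twin hcd).right with hd | hd
    · exact absurd (α.trans (α.symm (hc x hx y hy hxy))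
        (α.trans (hh.map_rel α hFx) (hd x hx y hy hxy))) hne
    · exact hU.injOn_of_twin H (hF'.twin fun j => ρ.symm (hcd j)) (hmaps d) (hmaps c) hd
  obtain ⟨k, hk⟩ := exists_iterate_inverse U
  set π := fun z => h (F z c)
  have hπ : Twin ρ π π := (hF'.twin hcd).left
  have hinv {z} (hz : z ∈ U) := hk π (hmaps c) hinj z hz
  have hrel := hU.rel_of_rel_of_eq_self hcov H (hF'.comp (hπ.iterate k))
    (fun z w => (hmaps c).iterate k (hhU _)) hcd (fun z hz => (hinv hz).2) hx hy hxy
    ((hπ.iterate k).map_rel α (hh.map_rel α hFx))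
  exact hne (by simpa only [(hinv (hhU _)).1] using hπ.map_rel α hrel)

end IsMinimalSet

theorem chooseVec_lastCases_const {β : Type} {N n : ℕ} (g : Fin N → Fin (n + 1)) (a b : Fin N → β)
    [DecidablePred (· ∈ {i | g i = Fin.last n})] (s t : Bool) :
    chooseVec g a b (Fin.lastCases (motive := fun _ => Bool) s fun _ => t) =
      {i | g i = Fin.last n}.piecewise (if s then b else a) (if t then b else a) := by
  funext i
  cases hi : g i using Fin.lastCases <;> cases s <;> cases t <;> simp [chooseVec, Set.piecewise, hi]

theorem CornerCondition.centralizes [Finite A.carrier] {n : ℕ}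
    (hcov : α ⋖ ρ) (H : CornerCondition ρ α n) : Centralizes (fun _ : Fin 1 => ρ) ρ α := by
  classical
  obtain ⟨U, hU⟩ := exists_isMinimalSet hcov
  intro N p hp g a b hab hside
  replace hab (i) : ρ.r (a i) (b i) := by simpa only [lastCases_const] using hab i
  replace hside := hside (fun _ => false) fun h => Bool.noConfusion (congrFun h 0)
  set F : (Fin N → A.carrier) → (Fin N → A.carrier) → A.carrier :=
    fun t w => p ({i | g i = Fin.last 1}.piecewise w t)
  let s : Setoid (Fin N → A.carrier) :=
    { r t t' := α.r (F t a) (F t b) ↔ α.r (F t' a) (F t' b)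
      iseqv := ⟨fun _ => .rfl, .symm, .trans⟩ }
  have hs : s a b := by
    refine rel_of_forall_eqvGen s (fun t i v v' hstep => ?_) fun j =>
      hU.eqvGen_traceStep hcov (hab j)
    cases hstep with
    | base h =>
      have hF (w) : α.r (F (Function.update t i v) w) (F (Function.update t i v') w) :=
        hp.map_rel α fun j => by
          by_cases hj : j ∈ {i | g i = Fin.last 1}
          · simpa only [Set.piecewise_eq_of_mem _ _ _ hj] using α.refl _
          · simpa only [Set.piecewise_eq_of_notMem _ _ _ hj] using α.update_rel h t i j
      exact ⟨fun h' => α.trans (α.symm (hF a)) (α.trans h' (hF b)),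
        fun h' => α.trans (hF a) (α.trans h' (α.symm (hF b)))⟩
    | @image f u v hf hu hv huv =>
      have hF : PreservesTwins ρ fun z w => F (Function.update t i (f z)) w :=
        fun f₁ f₂ φ ψ h hφ => hp.twin fun j => by
          by_cases hj : j ∈ {i | g i = Fin.last 1}
          · simpa only [Set.piecewise_eq_of_mem _ _ _ hj] using hφ j
          · simpa only [Set.piecewise_eq_of_notMem _ _ _ hj] using (hf.comp h).update t i j
      exact ⟨hU.rel_of_rel hcov H hF hab hu hv huv,
        hU.rel_of_rel hcov H hF hab hv hu (ρ.symm huv)⟩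
  simp only [chooseVec_lastCases_const] at hside ⊢
  exact hs.1 hside

end PrimeQuotient

/-! ### Higher commutators -/

section Commutator

variable {A : Algebra σ} {n : ℕ}

theorem Centralizes.mono {α α' : Fin n → Con A} {β β' δ : Con A} (hα : ∀ i, α i ≤ α' i)
    (hβ : β ≤ β') (h : Centralizes α' β' δ) : Centralizes α β δ :=
  fun N p hp g a b hab => h N p hp g a b fun i => by
    specialize hab i
    cases hi : g i using Fin.lastCases with
    | last =>
      simp only [hi, Fin.lastCases_last] at hab ⊢
      exact hβ _ _ hab
    | cast j =>
      simp only [hi, Fin.lastCases_castSucc] at hab ⊢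
      exact hα j _ _ hab

theorem centralizes_commutator (α : Fin n → Con A) (β : Con A) :
    Centralizes α β (commutator α β) :=
  fun N p hp g a b hab hside δ hδ => hδ N p hp g a b hab fun ε hε => hside ε hε δ hδ

theorem commutator_le {α : Fin n → Con A} {β δ : Con A} (h : Centralizes α β δ) :
    commutator α β ≤ δ :=
  fun _ _ hab => hab δ h

theorem centralizes_right (α : Fin n → Con A) (β : Con A) : Centralizes α β β := by
  refine fun N p hp g a b hab _ => hp.map_rel β fun i => ?_
  specialize hab i
  cases hi : g i using Fin.lastCases with
  | last => simpa [chooseVec, hi] using hab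
  | cast j => simpa [chooseVec, hi] using β.refl _

theorem binComm_mono {α β : Con A} (h : α ≤ β) : binComm α α ≤ binComm β β :=
  commutator_le ((centralizes_commutator _ _).mono (fun _ => h) h)

theorem derived_antitone (θ : Con A) : Antitone (derived θ) :=
  antitone_nat_of_succ_le fun _ => commutator_le (centralizes_right _ _)

theorem nfold_mono {θ θ' : Con A} (h : θ ≤ θ') : ∀ n, nfold θ n ≤ nfold θ' n
  | 0 | 1 => h
  | _ + 2 => commutator_le ((centralizes_commutator _ _).mono (fun _ => h) h)

theorem nfold_le (θ : Con A) : ∀ n, nfold θ n ≤ θ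
  | 0 | 1 => le_rfl
  | _ + 2 => commutator_le (centralizes_right _ _)

theorem exists_derived_le_nfold [Finite A.carrier] (θ : Con A) :
    ∃ k, ∀ n, derived θ k ≤ nfold θ n := by
  obtain ⟨k, hk⟩ := WellFoundedLT.antitone_chain_condition (derived_antitone θ)
  have hρθ : derived θ k ≤ θ := derived_antitone θ (Nat.zero_le k)
  refine ⟨k, fun n => ?_⟩
  match n with
  | 0 | 1 => exact hρθ
  | m + 2 =>
    set ρ := derived θ k
    set δ := nfold θ (m + 2)
    by_contra hρδ
    have hlt : ρ.inf δ < ρ := ⟨fun _ _ h => h.1, fun h => hρδ fun x y hxy => (h x y hxy).2⟩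
    obtain ⟨α, hα, hcov⟩ := exists_le_covBy_of_lt hlt
    have H : CornerCondition ρ α (m + 2) := .of_centralizes (centralizes_commutator _ _) hρθ hα
    have hρρ : binComm ρ ρ = ρ := (hk (k + 1) k.le_succ).symm
    exact hcov.lt.2 (hρρ ▸ commutator_le (H.centralizes hcov))

end Commutator

/-! ### Homomorphisms and quotients -/

section Hom

variable {A B : Algebra σ} {φ : A.carrier → B.carrier} {n : ℕ}

/-- The preimage of a congruence under a homomorphism. -/
def Con.comap (δ : Con B) (hφ : IsHom A B φ) : Con A where
  r a b := δ.r (φ a) (φ b)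
  refl _ := δ.refl _
  symm h := δ.symm h
  trans h h' := δ.trans h h'
  compat o x y h := by
    rw [hφ, hφ]
    exact δ.compat o _ _ h

theorem comp_vecCons₃ {X Y : Type*} (f : X → Y) (a b c : X) : f ∘ ![a, b, c] = ![f a, f b, f c] :=
  funext fun i => by fin_cases i <;> rfl

theorem comp_chooseVec {X Y : Type} (f : X → Y) {N n : ℕ} (g : Fin N → Fin n) (a b : Fin N → X)
    (ε : Fin n → Bool) : f ∘ chooseVec g a b ε = chooseVec g (f ∘ a) (f ∘ b) ε :=
  funext fun i => apply_ite f (ε (g i) = true) (b i) (a i)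

theorem IsHom.map_eval (hφ : IsHom A B φ) {X : Type} (t : Term σ X) (v : X → A.carrier) :
    φ (t.eval A v) = t.eval B (φ ∘ v) := by
  induction t with
  | var x => rfl
  | app o t ih => simp only [Term.eval, hφ o, ih]

theorem IsHom.map_eval₃ (hφ : IsHom A B φ) (t : Term σ (Fin 3)) (a b c : A.carrier) :
    φ (t.eval A ![a, b, c]) = t.eval B ![φ a, φ b, φ c] := by
  rw [hφ.map_eval, comp_vecCons₃]

theorem IsHom.exists_isPolynomial_image (hφ : IsHom A B φ) {N : ℕ}
    {p : (Fin N → A.carrier) → A.carrier} (hp : IsPolynomial A p) :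
    ∃ p', IsPolynomial B p' ∧ ∀ x, φ (p x) = p' (φ ∘ x) := by
  induction hp with
  | proj i => exact ⟨_, .proj i, fun _ => rfl⟩
  | const a => exact ⟨_, .const (φ a), fun _ => rfl⟩
  | app o g _ ih =>
    choose p' hp' h using ih
    exact ⟨_, .app o p' hp', fun x => by simp only [hφ o, h]⟩

theorem IsHom.exists_isPolynomial_lift (hφ : IsHom A B φ) (hsurj : Function.Surjective φ) {N : ℕ}
    {p : (Fin N → B.carrier) → B.carrier} (hp : IsPolynomial B p) :
    ∃ p', IsPolynomial A p' ∧ ∀ x, p (φ ∘ x) = φ (p' x) := by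
  induction hp with
  | proj i => exact ⟨_, .proj i, fun _ => rfl⟩
  | const b =>
    obtain ⟨a, rfl⟩ := hsurj b
    exact ⟨_, .const a, fun _ => rfl⟩
  | app o g _ ih =>
    choose p' hp' h using ih
    exact ⟨_, .app o p' hp', fun x => by simp only [hφ o, h]⟩

theorem lastCases_comap (hφ : IsHom A B φ) (α : Fin n → Con B) (β : Con B) (j : Fin (n + 1)) :
    Fin.lastCases (motive := fun _ => Con A) (β.comap hφ) (fun i => (α i).comap hφ) j =
      (Fin.lastCases (motive := fun _ => Con B) β α j).comap hφ := by
  cases j using Fin.lastCases <;> simp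

theorem Centralizes.comap {α : Fin n → Con B} {β δ : Con B} (h : Centralizes α β δ)
    (hφ : IsHom A B φ) :
    Centralizes (fun i => (α i).comap hφ) (β.comap hφ) (δ.comap hφ) := by
  intro N p hp g a b hab hside
  obtain ⟨p', hp', hpp'⟩ := hφ.exists_isPolynomial_image hp
  simp only [lastCases_comap] at hab
  simp only [Con.comap, hpp', comp_chooseVec] at hside ⊢
  exact h N p' hp' g _ _ hab hside

theorem Centralizes.of_comap {α : Fin n → Con B} {β δ : Con B} (hφ : IsHom A B φ)
    (hsurj : Function.Surjective φ)
    (h : Centralizes (fun i => (α i).comap hφ) (β.comap hφ) (δ.comap hφ)) :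
    Centralizes α β δ := by
  intro N p hp g a b hab hside
  obtain ⟨p', hp', hpp'⟩ := hφ.exists_isPolynomial_lift hsurj hp
  obtain ⟨a, rfl⟩ := hsurj.comp_left a
  obtain ⟨b, rfl⟩ := hsurj.comp_left b
  simp only [← comp_chooseVec, hpp'] at hside ⊢
  refine h N p' hp' g a b (fun i => ?_) hside
  rw [lastCases_comap]
  exact hab i

theorem nfold_comap_le (hφ : IsHom A B φ) (θ : Con B) :
    ∀ n, nfold (θ.comap hφ) n ≤ (nfold θ n).comap hφ
  | 0 | 1 => le_rfl
  | _ + 2 => commutator_le ((centralizes_commutator _ _).comap hφ)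

theorem IsHom.nfold_conPair (hφ : IsHom A B φ) {a b x y : A.carrier}
    (h : (nfold (conPair A a b) n).r x y) : (nfold (conPair B (φ a) (φ b)) n).r (φ x) (φ y) :=
  nfold_comap_le hφ _ n x y <|
    nfold_mono (conPair_le (γ := (conPair B (φ a) (φ b)).comap hφ) (conPair_rel _ _)) n x y h

theorem isHom_mk (γ : Con A) : IsHom A (quotAlg A γ) (Quotient.mk γ.toSetoid) := fun o x =>
  Quotient.sound <| γ.compat o _ _ fun i => γ.symm (Quotient.mk_out (s := γ.toSetoid) (x i))

theorem nfold_quot_nfold (θ : Con A) :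
    ∀ n, nfold (θ.quot (nfold θ n) (nfold_le θ n)) n = Con.bot
  | 0 | 1 => Con.eq_bot_of_le fun x y => Quotient.inductionOn₂ x y fun _ _ h => Quotient.sound h
  | n + 2 => by
    have hbot : Con.bot.comap (isHom_mk (nfold θ (n + 2))) = nfold θ (n + 2) :=
      Con.r_injective <| funext₂ fun _ _ => propext Quotient.eq
    refine Con.eq_bot_of_le <| commutator_le <|
      .of_comap (isHom_mk _) Quotient.mk_surjective ?_
    rw [hbot]
    exact centralizes_commutator _ _

theorem IsVariety.quotAlg_mem {V : Algebra σ → Prop} (hV : IsVariety V) (hA : V A) (γ : Con A) :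
    V (quotAlg A γ) := by
  obtain ⟨E, hE⟩ := hV
  rw [hE] at hA ⊢
  intro e he v
  obtain ⟨w, rfl⟩ : ∃ w : ℕ → A.carrier, Quotient.mk γ.toSetoid ∘ w = v :=
    Quotient.mk_surjective.comp_left v
  exact ((isHom_mk γ).map_eval e.1 w).symm.trans <|
    (congrArg _ (hA e he w)).trans ((isHom_mk γ).map_eval e.2 w)

end Hom

/-! ### Free algebras -/

section Classes

variable {V : Algebra σ → Prop} {A : Algebra σ} {n : ℕ}

/-- The generators of the free algebra. -/
def freeGen (V : Algebra σ → Prop) {X : Type} (x : X) : (freeAlg V X).carrier :=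
  Quotient.mk (vSetoid V X) (.var x)

theorem Term.eval_freeAlg {X Y : Type} (t : Term σ Y) (s : Y → Term σ X) :
    t.eval (freeAlg V X) (Quotient.mk (vSetoid V X) ∘ s) =
      Quotient.mk (vSetoid V X) (t.subst s) := by
  induction t with
  | var x => rfl
  | app o t ih =>
    simp only [Term.eval, ih]
    refine Quotient.sound fun A hA v => congrArg (A.interp o) (funext fun i => ?_)
    exact Quotient.mk_out (s := vSetoid V X) ((t i).subst s) A hA v

theorem IsVariety.freeAlg_mem (hV : IsVariety V) (X : Type) : V (freeAlg V X) := by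
  obtain ⟨E, hE⟩ := id hV
  refine (hE _).2 fun e he v => ?_
  obtain ⟨s, rfl⟩ : ∃ s : ℕ → Term σ X, Quotient.mk (vSetoid V X) ∘ s = v :=
    Quotient.mk_surjective.comp_left v
  refine (Term.eval_freeAlg e.1 s).trans <|
    (Quotient.sound fun A hA w => ?_).trans (Term.eval_freeAlg e.2 s).symm
  rw [Term.eval_subst, Term.eval_subst]
  exact (hE A).1 hA e he _

theorem exists_isHom_freeAlg (hA : V A) {X : Type} (v : X → A.carrier) :
    ∃ φ, IsHom (freeAlg V X) A φ ∧ ∀ x, φ (freeGen V x) = v x := by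
  refine ⟨Quotient.lift (Term.eval A v) fun t s h => h A hA v, fun o x => ?_, fun x => rfl⟩
  refine congrArg (A.interp o) (funext fun i => ?_)
  conv_rhs => rw [← Quotient.out_eq (x i)]
  rfl

/-! ### Weak difference terms -/

/-- The first of the two conditions on weak `n`-difference terms. -/
def IsWeakLeftDiffTerm (V : Algebra σ → Prop) (n : ℕ) (c : Term σ (Fin 3)) : Prop :=
  ∀ ⦃A : Algebra σ⦄, V A → ∀ a b : A.carrier,
    (nfold (conPair A a b) n).r (c.eval A ![a, b, b]) a

/-- The second of the two conditions on weak `n`-difference terms. -/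
def IsWeakRightDiffTerm (V : Algebra σ → Prop) (n : ℕ) (c : Term σ (Fin 3)) : Prop :=
  ∀ ⦃A : Algebra σ⦄, V A → ∀ a b : A.carrier,
    (nfold (conPair A a b) n).r (c.eval A ![b, b, a]) a

/-- The term `c(z, y, x)`, exchanging the two conditions on weak `n`-difference terms. -/
def Term.rev (c : Term σ (Fin 3)) : Term σ (Fin 3) :=
  c.subst ![.var 2, .var 1, .var 0]

variable {c q : Term σ (Fin 3)}

theorem isWeakNDiffTerm_iff :
    IsWeakNDiffTerm V n c ↔ IsWeakLeftDiffTerm V n c ∧ IsWeakRightDiffTerm V n c :=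
  ⟨fun h => ⟨fun _ hA a b => (h _ hA a b).1, fun _ hA a b => Con.symm _ (h _ hA a b).2⟩,
    fun h _ hA a b => ⟨h.1 hA a b, Con.symm _ (h.2 hA a b)⟩⟩

theorem isWeakDiffTerm_iff : IsWeakDiffTerm V c ↔ IsWeakNDiffTerm V 2 c := Iff.rfl

theorem Term.eval_rev (x y z : A.carrier) : c.rev.eval A ![x, y, z] = c.eval A ![z, y, x] := by
  rw [Term.rev, Term.eval_subst, comp_vecCons₃]
  rfl

theorem isWeakLeftDiffTerm_rev : IsWeakLeftDiffTerm V n c.rev ↔ IsWeakRightDiffTerm V n c := by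
  simp only [IsWeakLeftDiffTerm, IsWeakRightDiffTerm, Term.eval_rev]

theorem isWeakRightDiffTerm_rev : IsWeakRightDiffTerm V n c.rev ↔ IsWeakLeftDiffTerm V n c := by
  simp only [IsWeakLeftDiffTerm, IsWeakRightDiffTerm, Term.eval_rev]

theorem IsWeakLeftDiffTerm.of_freeAlg
    (h : (nfold (conPair (freeAlg V (Fin 2)) (freeGen V 0) (freeGen V 1)) n).r
      (c.eval _ ![freeGen V 0, freeGen V 1, freeGen V 1]) (freeGen V 0)) :
    IsWeakLeftDiffTerm V n c := by
  intro A hA a b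
  obtain ⟨φ, hφ, hgen⟩ := exists_isHom_freeAlg hA ![a, b]
  have h₀ : φ (freeGen V 0) = a := hgen 0
  have h₁ : φ (freeGen V 1) = b := hgen 1
  simpa only [hφ.map_eval₃, h₀, h₁] using hφ.nfold_conPair h

theorem IsWeakLeftDiffTerm.eval_self (h : IsWeakLeftDiffTerm V n c) (hA : V A) (a : A.carrier) :
    c.eval A ![a, a, a] = a :=
  conPair_le (γ := Con.bot) rfl _ _ (nfold_le _ n _ _ (h hA a a))

theorem Term.eval_qSeq_succ (q : Term σ (Fin 3)) (k : ℕ) (x y z : A.carrier) :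
    (qSeq q (k + 1)).eval A ![x, y, z] =
      q.eval A ![x, (qSeq q k).eval A ![x, y, y], (qSeq q k).eval A ![x, y, z]] := by
  rw [qSeq, Term.eval_subst, comp_vecCons₃, Term.eval_subst, comp_vecCons₃]
  rfl

theorem Term.eval_qSeq (q : Term σ (Fin 3)) (k : ℕ) (x y : A.carrier) :
    (qSeq q k).eval A ![x, y, y] = (fun w => q.eval A ![x, w, w])^[k + 1] y := by
  induction k with
  | zero => rfl
  | succ k ih => rw [Term.eval_qSeq_succ, ih, Function.iterate_succ_apply' _ (k + 1)]

theorem IsWeakLeftDiffTerm.iterate_rel (hq : IsWeakLeftDiffTerm V 2 q) (hA : V A)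
    (x y : A.carrier) :
    ∀ k, (derived (conPair A x y) k).r ((fun w => q.eval A ![x, w, w])^[k] y) x
  | 0 => Con.symm _ (conPair_rel x y)
  | k + 1 => by
    rw [Function.iterate_succ_apply']
    have ih := (derived (conPair A x y) k).symm (hq.iterate_rel hA x y k)
    exact binComm_mono (conPair_le ih) _ _ (hq hA x _)

theorem IsWeakLeftDiffTerm.exists_forall_qSeq (hfree : V (freeAlg V (Fin 2)))
    [Finite (freeAlg V (Fin 2)).carrier] (hq : IsWeakLeftDiffTerm V 2 q) :
    ∃ k, ∀ n, IsWeakLeftDiffTerm V n (qSeq q k) := by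
  obtain ⟨k, hk⟩ := exists_iterate_idempotent (X := (freeAlg V (Fin 2)).carrier)
  refine ⟨k, fun n => .of_freeAlg ?_⟩
  set x := freeGen V (0 : Fin 2)
  set y := freeGen V (1 : Fin 2)
  obtain ⟨m, hm⟩ := exists_derived_le_nfold (conPair (freeAlg V (Fin 2)) x y)
  have stable (j : ℕ) : (fun w => q.eval (freeAlg V (Fin 2)) ![x, w, w])^[(k + 1) * (j + 1)] y =
      (fun w => q.eval (freeAlg V (Fin 2)) ![x, w, w])^[k + 1] y := by
    induction j with
    | zero => rw [zero_add, mul_one]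
    | succ j ih => rw [mul_add_one, add_comm, Function.iterate_add_apply, ih, hk]
  rw [Term.eval_qSeq, ← stable m]
  refine hm n _ _ (derived_antitone _ ?_ _ _ (hq.iterate_rel hfree x y _))
  nlinarith

theorem isWeakRightDiffTerm_qSeq (hid : ∀ ⦃A⦄, V A → ∀ a : A.carrier, q.eval A ![a, a, a] = a)
    (hq : IsWeakRightDiffTerm V n q) : ∀ k, IsWeakRightDiffTerm V n (qSeq q k)
  | 0 => hq
  | k + 1 => fun A hA a b => by
    have hb : (qSeq q k).eval A ![b, b, b] = b := by
      rw [Term.eval_qSeq]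
      exact Function.iterate_fixed (hid hA b) _
    rw [Term.eval_qSeq_succ, hb]
    refine Con.trans _ (Term.eval_rel _ q fun i => ?_) (hq hA a b)
    fin_cases i
    exacts [Con.refl _ _, Con.refl _ _, isWeakRightDiffTerm_qSeq hid hq k hA a b]

theorem IsWeakDiffTerm.exists_forall_isWeakNDiffTerm (hfree : V (freeAlg V (Fin 2)))
    [Finite (freeAlg V (Fin 2)).carrier] (hq : IsWeakDiffTerm V q) :
    ∃ c, ∀ n, IsWeakNDiffTerm V n c := by
  obtain ⟨hleft, hright⟩ := isWeakNDiffTerm_iff.1 (isWeakDiffTerm_iff.1 hq)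
  obtain ⟨k, hk⟩ := hleft.exists_forall_qSeq hfree
  have hright' := isWeakRightDiffTerm_qSeq (fun _ => hleft.eval_self) hright k
  obtain ⟨l, hl⟩ := (isWeakLeftDiffTerm_rev.2 hright').exists_forall_qSeq hfree
  refine ⟨qSeq (qSeq q k).rev l, fun n => isWeakNDiffTerm_iff.2 ⟨hl n, ?_⟩⟩
  exact isWeakRightDiffTerm_qSeq (fun _ => (isWeakLeftDiffTerm_rev.2 hright').eval_self)
    (isWeakRightDiffTerm_rev.2 (hk n)) l

/-! ### Mal'cev terms on supernilpotent congruences -/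

/-- An idempotent ternary term of the class `V` which restricts to a Mal'cev operation on the blocks
of the supernilpotent congruences of the members of `V`. -/
def IsSupernilpotentMalcevTerm (V : Algebra σ → Prop) (c : Term σ (Fin 3)) : Prop :=
  (∀ A : Algebra σ, V A → ∀ a : A.carrier, c.eval A ![a, a, a] = a) ∧
    ∀ A : Algebra σ, V A → ∀ θ : Con A, (∃ n, 2 ≤ n ∧ nfold θ n = Con.bot) →
      ∀ a b : A.carrier, θ.r a b → c.eval A ![a, b, b] = a ∧ c.eval A ![b, b, a] = a

theorem isSupernilpotentMalcevTerm_of_forall (hc : ∀ n, 2 ≤ n → IsWeakNDiffTerm V n c) :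
    IsSupernilpotentMalcevTerm V c := by
  refine ⟨fun A hA => (isWeakNDiffTerm_iff.1 (hc 2 le_rfl)).1.eval_self hA, ?_⟩
  rintro A hA θ ⟨n, hn, hθ⟩ a b hab
  have hle : nfold (conPair A a b) n ≤ Con.bot := hθ ▸ nfold_mono (conPair_le hab) n
  obtain ⟨hleft, hright⟩ := hc n hn A hA a b
  exact ⟨hle _ _ hleft, (hle _ _ hright).symm⟩

theorem IsSupernilpotentMalcevTerm.isWeakNDiffTerm
    (hquot : ∀ A : Algebra σ, V A → ∀ γ : Con A, V (quotAlg A γ))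
    (hc : IsSupernilpotentMalcevTerm V c) (hn : 2 ≤ n) : IsWeakNDiffTerm V n c := by
  intro A hA a b
  set θ := conPair A a b
  have hmk := isHom_mk (nfold θ n)
  obtain ⟨hleft, hright⟩ := hc.2 _ (hquot A hA _) _ ⟨n, hn, nfold_quot_nfold θ n⟩
    (Quotient.mk _ a) (Quotient.mk _ b) (conPair_rel a b)
  exact ⟨Quotient.exact ((hmk.map_eval₃ c a b b).trans hleft),
    Con.symm _ (Quotient.exact ((hmk.map_eval₃ c b b a).trans hright))⟩

theorem weak_n_difference_characterization_general
    (hquot : ∀ A : Algebra σ, V A → ∀ γ : Con A, V (quotAlg A γ))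
    (hfree : V (freeAlg V (Fin 2))) (hfin : Finite (freeAlg V (Fin 2)).carrier) :
    List.TFAE [∃ c, ∀ n, 2 ≤ n → IsWeakNDiffTerm V n c, ∃ c, IsSupernilpotentMalcevTerm V c,
      ∃ c, IsWeakDiffTerm V c] := by
  tfae_have 1 → 2 := fun ⟨c, hc⟩ => ⟨c, isSupernilpotentMalcevTerm_of_forall hc⟩
  tfae_have 2 → 3 := fun ⟨c, hc⟩ => ⟨c, isWeakDiffTerm_iff.2 (hc.isWeakNDiffTerm hquot le_rfl)⟩
  tfae_have 3 → 1 := fun ⟨_, hq⟩ =>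
    (hq.exists_forall_isWeakNDiffTerm hfree).imp fun _ hc n _ => hc n
  tfae_finish

end Classes

/-- Theorem 4.9 of "On Supernilpotent Algebras": for a variety whose 2-generated
free algebra is finite, the following are equivalent: (1) there is a single term
which is a weak `n`-difference term for all `n ≥ 2`; (2) there is an idempotent
ternary term which restricts to a Mal'cev operation on every block of every
supernilpotent congruence of every member; (3) the variety has a weak
difference term. -/
theorem weak_n_difference_characterization {σ : Signature} (V : Algebra σ → Prop)
    (hV : IsVariety V) (hfin : Finite (freeAlg V (Fin 2)).carrier) :
    ((∃ c : Term σ (Fin 3), ∀ n : ℕ, 2 ≤ n → IsWeakNDiffTerm V n c) ↔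
      (∃ c : Term σ (Fin 3),
        (∀ A : Algebra σ, V A → ∀ a : A.carrier, c.eval A ![a, a, a] = a) ∧
        (∀ A : Algebra σ, V A → ∀ θ : Con A, (∃ n, 2 ≤ n ∧ nfold θ n = Con.bot) →
          ∀ a b : A.carrier, θ.r a b →
            c.eval A ![a, b, b] = a ∧ c.eval A ![b, b, a] = a))) ∧
    ((∃ c : Term σ (Fin 3),
        (∀ A : Algebra σ, V A → ∀ a : A.carrier, c.eval A ![a, a, a] = a) ∧
        (∀ A : Algebra σ, V A → ∀ θ : Con A, (∃ n, 2 ≤ n ∧ nfold θ n = Con.bot) →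
          ∀ a b : A.carrier, θ.r a b →
            c.eval A ![a, b, b] = a ∧ c.eval A ![b, b, a] = a)) ↔
      (∃ c : Term σ (Fin 3), IsWeakDiffTerm V c)) := by
  have tfae := weak_n_difference_characterization_general (fun _ hA => hV.quotAlg_mem hA)
    (hV.freeAlg_mem (Fin 2)) hfin
  exact ⟨tfae.out 0 1, tfae.out 1 2⟩

end UA
end

section
/- Let V be a variety with a weak f-term, A ∈ V, and γ,θ,θ₁,…,θₙ congruences of A with each θ_i ≤ θ. Suppose ā₁,…,ā_{n−1},b̄₁,…,b̄_{n−1},ū,v̄ are tuples in A and p(x̄₁,…,x̄ₙ) is a polynomial of A such that: (1) ā_i ≡ b̄_i mod θ_i for i = 1,…,n−1 and ū ≡ v̄ mod θₙ; (2) p(z̄₁,…,z̄_{n−1},ū) ≡ p(z̄₁,…,z̄_{n−1},v̄) mod γ for every (z̄₁,…,z̄_{n−1}) ∈ {ā₁,b̄₁}×⋯×{ā_{n−1},b̄_{n−1}} other than (b̄₁,…,b̄_{n−1}); and (3) T^θ_{n,f}(θ₁,…,θₙ) ⊆ γ. Then (p(b̄₁,…,b̄_{n−1},ū), p(b̄₁,…,b̄_{n−1},v̄))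 ∈ f(θ) ∘ γ ∘ f(θ). -/
set_option autoImplicit false

namespace UA

variable {σ : Signature}

/-!
View the polynomial `q` as a labelling `H` of the vertices of a cube, one coordinate for each
group of variables, and let `ℓ` be the coordinate of the last group.  The labels `x` and `y` to be
related are those at the ends of the one edge in direction `ℓ` on which (2) says nothing.
Replacing `H(ε)` by `d(H(ε), H(ε with ε_j := false), H₀)`, where `d` is the weak `f`-term and `H₀`
is the label of the corner corresponding to `x`, makes the labels with `ε_j = false` equal to `x`
modulo `f(θ)`, since there the first two arguments of `d` agree.  At the top vertex the last two
arguments both become `x`, up to `γ` and `f(θ)`, so the label `y` persists.  After all coordinates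
have been treated the labelling is `f(θ)`-absorbing, so (3) puts its values at the top and the
bottom vertex, which are `y` and `x` up to these congruences, into `γ`.
-/

section Polynomials

variable {A : Algebra σ} {n : ℕ}

theorem IsPolynomial.rel (c : Con A) {f : (Fin n → A.carrier) → A.carrier}
    (hf : IsPolynomial A f) {x y : Fin n → A.carrier} (hxy : ∀ i, c.r (x i) (y i)) :
    c.r (f x) (f y) := by
  induction hf with
  | proj i => exact hxy i
  | const a => exact c.refl a
  | app o _ _ ih => exact c.compat o _ _ ih

theorem IsPolynomial.comp {k : ℕ} {f : (Fin n → A.carrier) → A.carrier}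
    (hf : IsPolynomial A f) {s : Fin n → (Fin k → A.carrier) → A.carrier}
    (hs : ∀ i, IsPolynomial A (s i)) : IsPolynomial A fun x => f fun i => s i x := by
  induction hf with
  | proj i => exact hs i
  | const a => exact .const a
  | app o _ _ ih => exact .app o _ ih

theorem IsPolynomial.rel₃ (c : Con A) {d : (Fin 3 → A.carrier) → A.carrier}
    (hd : IsPolynomial A d) {x y z x' y' z' : A.carrier} (hx : c.r x x') (hy : c.r y y')
    (hz : c.r z z') : c.r (d ![x, y, z]) (d ![x', y', z']) :=
  hd.rel c fun i => by fin_cases i <;> assumption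

theorem IsPolynomial.comp₃ {d : (Fin 3 → A.carrier) → A.carrier} (hd : IsPolynomial A d)
    {f₁ f₂ f₃ : (Fin n → A.carrier) → A.carrier} (h₁ : IsPolynomial A f₁)
    (h₂ : IsPolynomial A f₂) (h₃ : IsPolynomial A f₃) :
    IsPolynomial A fun x => d ![f₁ x, f₂ x, f₃ x] := by
  have hs : ∀ i, IsPolynomial A fun x => ![f₁ x, f₂ x, f₃ x] i := fun i => by
    fin_cases i <;> assumption
  exact hd.comp hs

theorem Term.isPolynomial_eval (t : Term σ (Fin n)) :
    IsPolynomial A fun x => t.eval A x := by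
  induction t with
  | var i => exact .proj i
  | app o _ ih => exact .app o _ ih

end Polynomials

/-- A ternary polynomial `d` satisfying the Mal'cev identities on pairs in `θ` up to `φ`.
This is what a weak `f`-term provides at the single congruence `θ`, with `φ = f(θ)`. -/
structure IsMalcevModulo {A : Algebra σ} (θ φ : Con A)
    (d : (Fin 3 → A.carrier) → A.carrier) : Prop where
  isPolynomial : IsPolynomial A d
  rel_left : ∀ {x y : A.carrier}, θ.r x y → φ.r (d ![x, y, y]) x
  rel_right : ∀ {x y : A.carrier}, θ.r x y → φ.r (d ![x, x, y]) y

theorem IsMalcevModulo.rel_of_rel {A : Algebra σ} {θ φ : Con A}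
    {d : (Fin 3 → A.carrier) → A.carrier} (hd : IsMalcevModulo θ φ d) {x y z c : A.carrier}
    (hx : φ.r x c) (hy : φ.r y c) (hz : φ.r z c) : φ.r (d ![x, y, z]) c :=
  φ.trans (hd.isPolynomial.rel₃ φ hx hy hz) (hd.rel_left (θ.refl c))

theorem IsWeakFTerm.isMalcevModulo {A : Algebra σ} {F : Con A → Con A} {p : Term σ (Fin 3)}
    (hp : IsWeakFTerm A F p) (θ : Con A) : IsMalcevModulo θ (F θ) fun x => p.eval A x where
  isPolynomial := p.isPolynomial_eval
  rel_left hxy := (hp θ _ _ hxy).1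
  rel_right hxy := (F θ).symm (hp θ _ _ (θ.symm hxy)).2

section CubePolynomials

variable {A : Algebra σ} {n N : ℕ}

/-- A labelling `H` of the vertices of the `n`-cube by elements of `A` that is the restriction
of a polynomial to the box `{ā₁, b̄₁} × ⋯ × {āₙ, b̄ₙ}`.  The vertex `ε` stands for the point
`chooseVec g a b ε`, so `⊥` stands for `a` and `⊤` for `b`. -/
def IsCubePolynomial (g : Fin N → Fin n) (a b : Fin N → A.carrier)
    (H : (Fin n → Bool) → A.carrier) : Prop :=
  ∃ h : (Fin N → A.carrier) → A.carrier, IsPolynomial A h ∧ H = fun ε => h (chooseVec g a b ε)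

namespace IsCubePolynomial

variable {g : Fin N → Fin n} {a b : Fin N → A.carrier} {H : (Fin n → Bool) → A.carrier}

theorem const (c : A.carrier) : IsCubePolynomial g a b fun _ => c :=
  ⟨fun _ => c, .const c, rfl⟩

theorem comp₃ {d : (Fin 3 → A.carrier) → A.carrier} (hd : IsPolynomial A d)
    {H₁ H₂ H₃ : (Fin n → Bool) → A.carrier} (h₁ : IsCubePolynomial g a b H₁)
    (h₂ : IsCubePolynomial g a b H₂) (h₃ : IsCubePolynomial g a b H₃) :
    IsCubePolynomial g a b fun ε => d ![H₁ ε, H₂ ε, H₃ ε] := by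
  obtain ⟨f₁, hf₁, rfl⟩ := h₁
  obtain ⟨f₂, hf₂, rfl⟩ := h₂
  obtain ⟨f₃, hf₃, rfl⟩ := h₃
  exact ⟨_, hd.comp₃ hf₁ hf₂ hf₃, rfl⟩

theorem update_false (hH : IsCubePolynomial g a b H) (j : Fin n) :
    IsCubePolynomial g a b fun ε => H (Function.update ε j false) := by
  obtain ⟨h, hh, rfl⟩ := hH
  have hreset : ∀ i, IsPolynomial A fun x : Fin N → A.carrier => if g i = j then a i else x i :=
    fun i => by
      split_ifs
      exacts [.const _, .proj i]
  refine ⟨_, hh.comp hreset, funext fun ε => congrArg h (funext fun i => ?_)⟩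
  by_cases hij : g i = j <;> simp [chooseVec, hij]

theorem rel {θ : Con A} (hab : ∀ i, θ.r (a i) (b i)) (hH : IsCubePolynomial g a b H)
    (ε ε' : Fin n → Bool) : θ.r (H ε) (H ε') := by
  obtain ⟨h, hh, rfl⟩ := hH
  refine hh.rel θ fun i => ?_
  unfold chooseVec
  split_ifs
  exacts [θ.refl _, θ.symm (hab i), hab i, θ.refl _]

theorem mem_TSet {F : Con A → Con A} {θ : Con A} {θs : Fin n → Con A}
    (hH : IsCubePolynomial g a b H) (hab : ∀ i, (θs (g i)).r (a i) (b i))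
    (habs : ∀ ε : Fin n → Bool, (∃ j, ε j = false) → (F θ).r (H ε) (H ⊥)) :
    (H ⊤, H ⊥) ∈ TSet A F θ θs := by
  obtain ⟨h, hh, rfl⟩ := hH
  exact ⟨N, h, hh, g, a, b, hab, habs, rfl⟩

end IsCubePolynomial

end CubePolynomials

section Absorption

variable {A : Algebra σ} {ι : Type} [DecidableEq ι] {φ γ : Con A} {ℓ j : ι} {x y : A.carrier}
  {S : Finset ι} {H : (ι → Bool) → A.carrier}

/-- The invariant kept while a cube labelling is made absorbing one coordinate after the other:
`H` already `φ`-absorbs to `x` in the coordinates of `S`, but it still has the value `x` (up to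
`φ`) at the vertex where only `ℓ` is `false`, the value `y` (up to `γ ∘ φ`) at the vertex `⊤`,
and `γ`-equal `ℓ`-faces away from the edge joining these two vertices. -/
structure PartiallyAbsorbs (φ γ : Con A) (ℓ : ι) (x y : A.carrier) (S : Finset ι)
    (H : (ι → Bool) → A.carrier) : Prop where
  absorb : ∀ ε : ι → Bool, (∃ i ∈ S, ε i = false) → φ.r (H ε) x
  corner : φ.r (H (Function.update ⊤ ℓ false)) x
  face : ∀ ε : ι → Bool, (∃ i ≠ ℓ, ε i = false) → γ.r (H ε) (H (Function.update ε ℓ false))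
  top : γ.comp φ (H ⊤) y

theorem partiallyAbsorbs_empty
    (hface : ∀ ε : ι → Bool, (∃ i ≠ ℓ, ε i = false) →
      γ.r (H (Function.update ε ℓ false)) (H (Function.update ε ℓ true))) :
    PartiallyAbsorbs φ γ ℓ (H (Function.update ⊤ ℓ false)) (H ⊤) ∅ H where
  absorb := by simp
  corner := φ.refl _
  face ε hε := by
    have hγ : ∀ s, γ.r (H (Function.update ε ℓ s)) (H (Function.update ε ℓ false))
      | false => γ.refl _
      | true => γ.symm (hface ε hε)
    simpa only [Function.update_eq_self] using hγ (ε ℓ)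
  top := ⟨H ⊤, γ.refl _, φ.refl _⟩

/-- The labelling obtained from `H` by the step that makes it absorbing in the coordinate `j`;
the third argument of `d` is a constant, the value of `H` where only `ℓ` is `false`. -/
def absorbStep (d : (Fin 3 → A.carrier) → A.carrier) (ℓ j : ι) (H : (ι → Bool) → A.carrier)
    (ε : ι → Bool) : A.carrier :=
  d ![H ε, H (Function.update ε j false), H (Function.update ⊤ ℓ false)]

theorem IsCubePolynomial.absorbStep {n N : ℕ} {g : Fin N → Fin n} {a b : Fin N → A.carrier}
    {H : (Fin n → Bool) → A.carrier} {d : (Fin 3 → A.carrier) → A.carrier}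
    (hd : IsPolynomial A d) (hH : IsCubePolynomial g a b H) (ℓ j : Fin n) :
    IsCubePolynomial g a b (absorbStep d ℓ j H) :=
  .comp₃ hd hH (hH.update_false j) (.const _)

namespace PartiallyAbsorbs

theorem corner_update_false (hH : PartiallyAbsorbs φ γ ℓ x y S H) (hj : j = ℓ ∨ ℓ ∈ S) :
    φ.r (H (Function.update (Function.update ⊤ ℓ false) j false)) x := by
  rcases eq_or_ne j ℓ with rfl | hne
  · simpa only [Function.update_idem] using hH.corner
  · exact hH.absorb _ ⟨ℓ, hj.resolve_left hne, by simp [hne.symm]⟩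

theorem top_update_false (hH : PartiallyAbsorbs φ γ ℓ x y S H) (hj : j = ℓ ∨ ℓ ∈ S) :
    γ.comp φ (H (Function.update ⊤ j false)) x := by
  rcases eq_or_ne j ℓ with rfl | hne
  · exact ⟨_, γ.refl _, hH.corner⟩
  · exact ⟨_, hH.face _ ⟨j, hne, by simp⟩, hH.absorb _ ⟨ℓ, hj.resolve_left hne, by simp⟩⟩

variable {θ : Con A} {d : (Fin 3 → A.carrier) → A.carrier}

theorem absorb_absorbStep (hd : IsMalcevModulo θ φ d) (hθ : ∀ ε ε', θ.r (H ε) (H ε'))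
    (hH : PartiallyAbsorbs φ γ ℓ x y S H) {ε : ι → Bool} (hε : ∃ i ∈ insert j S, ε i = false) :
    φ.r (absorbStep d ℓ j H ε) x := by
  obtain ⟨i, hi, hεi⟩ := hε
  rcases Finset.mem_insert.1 hi with rfl | hiS
  · have hself : Function.update ε i false = ε := Function.update_eq_self_iff.2 hεi.symm
    simpa only [absorbStep, hself] using φ.trans (hd.rel_right (hθ _ _)) hH.corner
  · have hreset : Function.update ε j false i = false := by
      simp [Function.update_apply, hεi]
    exact hd.rel_of_rel (hH.absorb ε ⟨i, hiS, hεi⟩) (hH.absorb _ ⟨i, hiS, hreset⟩) hH.corner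

theorem face_absorbStep (hd : IsPolynomial A d) (hH : PartiallyAbsorbs φ γ ℓ x y S H)
    {ε : ι → Bool} (hε : ∃ i ≠ ℓ, ε i = false) :
    γ.r (absorbStep d ℓ j H ε) (absorbStep d ℓ j H (Function.update ε ℓ false)) := by
  refine hd.rel₃ γ (hH.face ε hε) ?_ (γ.refl _)
  rcases eq_or_ne j ℓ with rfl | hne
  · simpa only [Function.update_idem] using γ.refl _
  · rw [Function.update_comm hne.symm]
    exact hH.face _ ⟨j, hne, by simp⟩

theorem top_absorbStep (hd : IsMalcevModulo θ φ d) (hyx : θ.r y x)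
    (hH : PartiallyAbsorbs φ γ ℓ x y S H) (hj : j = ℓ ∨ ℓ ∈ S) :
    γ.comp φ (absorbStep d ℓ j H ⊤) y := by
  obtain ⟨y', hγy, hφy⟩ := hH.top
  obtain ⟨x', hγx, hφx⟩ := hH.top_update_false hj
  exact ⟨d ![y', x', H (Function.update ⊤ ℓ false)],
    hd.isPolynomial.rel₃ γ hγy hγx (γ.refl _),
    φ.trans (hd.isPolynomial.rel₃ φ hφy hφx hH.corner) (hd.rel_left hyx)⟩

theorem absorbStep (hd : IsMalcevModulo θ φ d) (hθ : ∀ ε ε', θ.r (H ε) (H ε'))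
    (hyx : θ.r y x) (hH : PartiallyAbsorbs φ γ ℓ x y S H) (hj : j = ℓ ∨ ℓ ∈ S) :
    PartiallyAbsorbs φ γ ℓ x y (insert j S) (absorbStep d ℓ j H) where
  absorb _ := hH.absorb_absorbStep hd hθ
  corner := hd.rel_of_rel hH.corner (hH.corner_update_false hj) hH.corner
  face _ := hH.face_absorbStep hd.isPolynomial
  top := hH.top_absorbStep hd hyx hj

end PartiallyAbsorbs

end Absorption

/-- The coordinate `ℓ` has to be treated first: the invariant passes to a further coordinate
only once `ℓ` is absorbed. -/
theorem IsCubePolynomial.exists_partiallyAbsorbs {A : Algebra σ} {n N : ℕ} {θ φ γ : Con A}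
    {d : (Fin 3 → A.carrier) → A.carrier} (hd : IsMalcevModulo θ φ d) {g : Fin N → Fin n}
    {a b : Fin N → A.carrier} (hab : ∀ i, θ.r (a i) (b i)) {ℓ : Fin n} {x y : A.carrier}
    (hyx : θ.r y x) {H₀ : (Fin n → Bool) → A.carrier} (hH₀ : IsCubePolynomial g a b H₀)
    (hH₀' : PartiallyAbsorbs φ γ ℓ x y ∅ H₀) (S : Finset (Fin n)) :
    ∃ H, IsCubePolynomial g a b H ∧ PartiallyAbsorbs φ γ ℓ x y (insert ℓ S) H := by
  induction S using Finset.induction_on with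
  | empty => exact ⟨_, hH₀.absorbStep hd.isPolynomial ℓ ℓ,
      hH₀'.absorbStep hd (hH₀.rel hab) hyx (.inl rfl)⟩
  | insert j S _ ih =>
    obtain ⟨H, hH, hH'⟩ := ih
    rw [Finset.insert_comm]
    exact ⟨_, hH.absorbStep hd.isPolynomial ℓ j,
      hH'.absorbStep hd (hH.rel hab) hyx (.inr (Finset.mem_insert_self ℓ S))⟩

theorem weak_f_term_key_lemma_general {A : Algebra σ} {F : Con A → Con A} {θ γ : Con A}
    {d : (Fin 3 → A.carrier) → A.carrier} (hd : IsMalcevModulo θ (F θ) d) {n N : ℕ}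
    {θs : Fin n → Con A} (hθs : ∀ i, θs i ≤ θ) {q : (Fin N → A.carrier) → A.carrier}
    (hq : IsPolynomial A q) {g : Fin N → Fin n} {a b : Fin N → A.carrier}
    (hab : ∀ i, (θs (g i)).r (a i) (b i)) (ℓ : Fin n)
    (hface : ∀ ε : Fin n → Bool, (∃ i ≠ ℓ, ε i = false) →
      γ.r (q (chooseVec g a b (Function.update ε ℓ false)))
        (q (chooseVec g a b (Function.update ε ℓ true))))
    (hT : ∀ pr ∈ TSet A F θ θs, γ.r pr.1 pr.2) :
    ∃ u v : A.carrier, (F θ).r (q (chooseVec g a b (Function.update ⊤ ℓ false))) u ∧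
      γ.r u v ∧ (F θ).r v (q (chooseVec g a b (Function.update ⊤ ℓ true))) := by
  rw [show Function.update (⊤ : Fin n → Bool) ℓ true = ⊤ from Function.update_eq_self ℓ _]
  have hθ : ∀ i, θ.r (a i) (b i) := fun i => hθs _ _ _ (hab i)
  let Q : (Fin n → Bool) → A.carrier := fun ε => q (chooseVec g a b ε)
  have hQ : IsCubePolynomial g a b Q := ⟨q, hq, rfl⟩
  have hQ' : PartiallyAbsorbs (F θ) γ ℓ (Q (Function.update ⊤ ℓ false)) (Q ⊤) ∅ Q :=
    partiallyAbsorbs_empty hface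
  obtain ⟨H, hH, hH'⟩ := hQ.exists_partiallyAbsorbs hd hθ (hQ.rel hθ _ _) hQ' Finset.univ
  have hbot := (F θ).symm (hH'.absorb ⊥ ⟨ℓ, by simp, rfl⟩)
  have hmem : (H ⊤, H ⊥) ∈ TSet A F θ θs :=
    hH.mem_TSet hab fun ε ⟨j, hj⟩ => (F θ).trans (hH'.absorb ε ⟨j, by simp, hj⟩) hbot
  obtain ⟨v, hγv, hφv⟩ := hH'.top
  exact ⟨H ⊥, v, hbot, γ.trans (γ.symm (hT _ hmem)) hγv, hφv⟩

theorem lastCases_castSucc_eq_update {α : Type*} {m : ℕ} (s : α) (ε : Fin (m + 1) → α) :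
    Fin.lastCases (motive := fun _ => α) s (fun i => ε i.castSucc) =
      Function.update ε (Fin.last m) s := by
  funext i
  cases i using Fin.lastCases <;> simp [Fin.castSucc_ne_last]

theorem lastCases_true_eq_update_top {m : ℕ} (s : Bool) :
    Fin.lastCases (motive := fun _ => Bool) s (fun _ : Fin m => true) =
      Function.update ⊤ (Fin.last m) s :=
  lastCases_castSucc_eq_update s ⊤

theorem rel_update_last_of_rel_lastCases {A : Algebra σ} {γ : Con A} {m : ℕ}
    {H : (Fin (m + 1) → Bool) → A.carrier}
    (hH : ∀ ε : Fin m → Bool, ε ≠ (fun _ => true) →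
      γ.r (H (Fin.lastCases (motive := fun _ => Bool) false ε))
        (H (Fin.lastCases (motive := fun _ => Bool) true ε)))
    (ε : Fin (m + 1) → Bool) (hε : ∃ i ≠ Fin.last m, ε i = false) :
    γ.r (H (Function.update ε (Fin.last m) false)) (H (Function.update ε (Fin.last m) true)) := by
  obtain ⟨i, hi, hεi⟩ := hε
  obtain ⟨k, rfl⟩ := Fin.exists_castSucc_eq.2 hi
  have hinit : (fun i : Fin m => ε i.castSucc) ≠ fun _ => true := fun h => by
    simpa [hεi] using congrFun h k
  simpa only [← lastCases_castSucc_eq_update] using hH _ hinit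

/-- Lemma 5.6 of "On Supernilpotent Algebras": the key lemma for varieties with a
weak `f`-term.  Under hypotheses (1)-(3), the two substitution values of `p` at
`(b̄₁,…,b̄_{n-1},ū)` and `(b̄₁,…,b̄_{n-1},v̄)` are related by `f(θ) ∘ γ ∘ f(θ)`. -/
theorem weak_f_term_key_lemma {σ : Signature} (V : Algebra σ → Prop)
    (hV : IsVariety V) (p : Term σ (Fin 3)) (hp : HasWeakFTermVariety V p)
    (A : Algebra σ) (hA : V A)
    (F : Con A → Con A) (hFmono : MonotoneCon F) (hF : IsWeakFTerm A F p)
    {m : ℕ} (θ : Con A) (θs : Fin (m + 1) → Con A) (γ : Con A)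
    (hθs : ∀ i, θs i ≤ θ)
    {M : ℕ} (q : (Fin M → A.carrier) → A.carrier) (hq : IsPolynomial A q)
    (g : Fin M → Fin (m + 1)) (a b : Fin M → A.carrier)
    (h1 : ∀ i, (θs (g i)).r (a i) (b i))
    (h2 : ∀ ε : Fin m → Bool, ε ≠ (fun _ => true) →
      γ.r (q (chooseVec g a b (Fin.lastCases (motive := fun _ => Bool) false ε)))
          (q (chooseVec g a b (Fin.lastCases (motive := fun _ => Bool) true ε))))
    (h3 : ∀ pr ∈ TSet A F θ θs, γ.r pr.1 pr.2) :
    ∃ u v : A.carrier,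
      (F θ).r (q (chooseVec g a b
          (Fin.lastCases (motive := fun _ => Bool) false fun _ => true))) u ∧
      γ.r u v ∧
      (F θ).r v (q (chooseVec g a b
          (Fin.lastCases (motive := fun _ => Bool) true fun _ => true))) := by
  simpa only [lastCases_true_eq_update_top] using
    weak_f_term_key_lemma_general (hF.isMalcevModulo θ) hθs hq h1 (Fin.last m)
      (rel_update_last_of_rel_lastCases (H := fun ε => q (chooseVec g a b ε)) h2) h3

end UA
end
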